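/- arXiv:1404.1495 — 6 statements merged into one kernel-verified Lean document; each statement's English description precedes it below -/
import Mathlib

section
/- Let μ ∈ ℝ, c₊ > 0, c₋ > 0, λ₋ < 0 < λ₊, ν ∈ (0,1) ∪ (1,2), let ψ be the associated KoBoL characteristic exponent, and let κ₋, κ₊ satisfy λ₋ < κ₋ < 0 < κ₊ < λ₊. Set d = −Γ(−ν)·cos(πν/2)·(c₊ + c₋). Then Re ψ(ξ) / |Re ξ|^ν tends to d uniformly on the strip: for every ε > 0 there exists X > 0 such that for all ξ ∈ ℂ with Im ξ ∈ [κ₋, κ₊] and |Re ξ| ≥ X, one has |Re ψ(ξ) / |Re ξ|^ν − d| < ε. -/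
open Complex

/-- The KoBoL characteristic exponent (principal branch of complex powers). -/
noncomputable def kobolPsi (μ cp cm lm lp ν : ℝ) : ℂ → ℂ := fun ξ =>
  -Complex.I * μ * ξ
    + (cp : ℂ) * Complex.Gamma (-(ν : ℂ)) *
        (((-lm : ℂ)) ^ (ν : ℂ) - (-(lm : ℂ) - Complex.I * ξ) ^ (ν : ℂ))
    + (cm : ℂ) * Complex.Gamma (-(ν : ℂ)) *
        (((lp : ℂ)) ^ (ν : ℂ) - ((lp : ℂ) + Complex.I * ξ) ^ (ν : ℂ))

open Filter Topology

/-- The KoBoL exponent `kobolPsi` with the factors `c₊Γ(−ν)` and `c₋Γ(−ν)` replaced by arbitrary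
real weights `a` and `b`, so that it is also meaningful where the Gamma factor has a pole. -/
noncomputable def weightedKobolPsi (μ a b lm lp ν : ℝ) : ℂ → ℂ := fun ξ =>
  -I * μ * ξ + a * ((-lm : ℂ) ^ (ν : ℂ) - (-lm - I * ξ) ^ (ν : ℂ))
    + b * ((lp : ℂ) ^ (ν : ℂ) - (lp + I * ξ) ^ (ν : ℂ))

lemma kobolPsi_eq_weightedKobolPsi (μ cp cm lm lp ν : ℝ) :
    kobolPsi μ cp cm lm lp ν =
      weightedKobolPsi μ (cp * Real.Gamma (-ν)) (cm * Real.Gamma (-ν)) lm lp ν := by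
  funext ξ
  simp only [kobolPsi, weightedKobolPsi, ofReal_mul, ← Gamma_ofReal, ofReal_neg]

lemma re_conj_cpow_ofReal (z : ℂ) (ν : ℝ) :
    ((starRingEnd ℂ z) ^ (ν : ℂ)).re = (z ^ (ν : ℂ)).re := by
  rw [conj_cpow_eq_ite, conj_ofReal]
  split_ifs
  · rfl
  · rw [conj_re]

lemma re_ofReal_mul_cpow_ofReal {t : ℝ} (ht : 0 < t) (z : ℂ) (ν : ℝ) :
    (((t : ℂ) * z) ^ (ν : ℂ)).re = t ^ ν * (z ^ (ν : ℂ)).re := by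
  rw [cpow_ofReal_re, cpow_ofReal_re, arg_real_mul _ ht, norm_mul, norm_real,
    Real.norm_of_nonneg ht.le, Real.mul_rpow ht.le (norm_nonneg _), mul_assoc]

lemma re_I_cpow_ofReal (ν : ℝ) : (I ^ (ν : ℂ)).re = Real.cos (Real.pi * ν / 2) := by
  rw [cpow_ofReal_re, norm_I, Real.one_rpow, one_mul, arg_I, div_mul_eq_mul_div]

lemma re_cpow_ofReal_eq_abs_im (z : ℂ) (ν : ℝ) :
    (z ^ (ν : ℂ)).re = (((z.re : ℂ) + |z.im| * I) ^ (ν : ℂ)).re := by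
  rcases abs_choice z.im with h | h
  · rw [h, re_add_im]
  · have hconj : starRingEnd ℂ z = z.re + |z.im| * I := by
      apply Complex.ext <;> simp [h]
    rw [← hconj, re_conj_cpow_ofReal]

lemma re_cpow_ofReal_of_im_ne_zero {z : ℂ} (hz : z.im ≠ 0) (ν : ℝ) :
    (z ^ (ν : ℂ)).re = |z.im| ^ ν * ((((z.re / |z.im| : ℝ) : ℂ) + I) ^ (ν : ℂ)).re := by
  have him : ((|z.im| : ℝ) : ℂ) ≠ 0 := ofReal_ne_zero.mpr (abs_ne_zero.mpr hz)
  rw [re_cpow_ofReal_eq_abs_im, ← re_ofReal_mul_cpow_ofReal (abs_pos.mpr hz), mul_add, ofReal_div,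
    mul_div_cancel₀ _ him]

-- Dividing `z` by `|im z|` and conjugating if necessary moves it to `re z / |im z| + I`, which
-- tends to `I`, a point where the principal branch is continuous.
lemma tendsto_re_cpow_div_abs_im_rpow {α : Type*} {l : Filter α} {z : α → ℂ}
    (him : ∀ᶠ x in l, (z x).im ≠ 0)
    (hratio : Tendsto (fun x => (z x).re / |(z x).im|) l (𝓝 0)) (ν : ℝ) :
    Tendsto (fun x => (z x ^ (ν : ℂ)).re / |(z x).im| ^ ν) l
      (𝓝 (Real.cos (Real.pi * ν / 2))) := by
  have hcont : ContinuousAt (fun t : ℝ => (((t : ℂ) + I) ^ (ν : ℂ)).re) 0 :=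
    continuous_re.continuousAt.comp <|
      ContinuousAt.cpow (by fun_prop) continuousAt_const (by simp [mem_slitPlane_iff])
  have hlim := hcont.tendsto.comp hratio
  rw [ofReal_zero, zero_add, re_I_cpow_ofReal] at hlim
  refine hlim.congr' ?_
  filter_upwards [him] with x hx
  rw [re_cpow_ofReal_of_im_ne_zero hx,
    mul_div_cancel_left₀ _ (Real.rpow_pos_of_pos (abs_pos.mpr hx) ν).ne', Function.comp_apply]

/-- The filter of neighbourhoods of `±∞` in the closed horizontal strip `κm ≤ im ξ ≤ κp`:
convergence along it is convergence as `|re ξ| → ∞`, uniformly in `im ξ`. -/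
def stripAtInfinity (κm κp : ℝ) : Filter ℂ :=
  comap (fun ξ : ℂ => |ξ.re|) atTop ⊓ 𝓟 (im ⁻¹' Set.Icc κm κp)

section StripAtInfinity

variable {κm κp : ℝ}

lemma eventually_stripAtInfinity_iff {p : ℂ → Prop} :
    (∀ᶠ ξ in stripAtInfinity κm κp, p ξ) ↔
      ∃ X > (0 : ℝ), ∀ ξ : ℂ, ξ.im ∈ Set.Icc κm κp → X ≤ |ξ.re| → p ξ := by
  have hbasis : (atTop : Filter ℝ).HasBasis (0 < ·) Set.Ici :=
    atTop_basis.to_hasBasis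
      (fun X _ => ⟨max X 1, by positivity, Set.Ici_subset_Ici.mpr (le_max_left X 1)⟩)
      (fun X _ => ⟨X, trivial, subset_rfl⟩)
  have hstrip := (hbasis.comap fun ξ : ℂ => |ξ.re|).inf_principal (im ⁻¹' Set.Icc κm κp)
  refine hstrip.eventually_iff.trans (exists_congr fun X => and_congr_right fun _ => ?_)
  exact ⟨fun h ξ him hre => h ⟨hre, him⟩, fun h ξ hξ => h ξ hξ.2 hξ.1⟩

lemma tendsto_abs_re_stripAtInfinity :
    Tendsto (fun ξ : ℂ => |ξ.re|) (stripAtInfinity κm κp) atTop :=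
  tendsto_comap.mono_left inf_le_left

lemma tendsto_im_div_stripAtInfinity {g : ℂ → ℝ}
    (hg : Tendsto g (stripAtInfinity κm κp) atTop) :
    Tendsto (fun ξ => ξ.im / g ξ) (stripAtInfinity κm κp) (𝓝 0) := by
  have him : ∀ᶠ ξ in stripAtInfinity κm κp, ξ.im ∈ Set.Icc κm κp :=
    mem_inf_of_right (mem_principal_self _)
  exact tendsto_bdd_div_atTop_nhds_zero (him.mono fun _ h => h.1) (him.mono fun _ h => h.2) hg

lemma eventually_re_ne_zero_stripAtInfinity : ∀ᶠ ξ in stripAtInfinity κm κp, ξ.re ≠ 0 :=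
  (tendsto_abs_re_stripAtInfinity.eventually_gt_atTop 0).mono fun _ => abs_pos.mp

lemma tendsto_add_mul_im_div_abs_re_stripAtInfinity (p s : ℝ) :
    Tendsto (fun ξ : ℂ => (p + s * ξ.im) / |ξ.re|) (stripAtInfinity κm κp) (𝓝 0) := by
  simpa [add_div, mul_div_assoc] using (tendsto_abs_re_stripAtInfinity.const_div_atTop p).add
    ((tendsto_im_div_stripAtInfinity tendsto_abs_re_stripAtInfinity).const_mul s)

lemma tendsto_re_add_I_mul_cpow_div (p ν : ℝ) :
    Tendsto (fun ξ : ℂ => (((p : ℂ) + I * ξ) ^ (ν : ℂ)).re / |ξ.re| ^ ν)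
      (stripAtInfinity κm κp) (𝓝 (Real.cos (Real.pi * ν / 2))) := by
  simpa using tendsto_re_cpow_div_abs_im_rpow (z := fun ξ : ℂ => p + I * ξ)
    (by simpa using eventually_re_ne_zero_stripAtInfinity)
    (by simpa using tendsto_add_mul_im_div_abs_re_stripAtInfinity p (-1)) ν

lemma tendsto_re_sub_I_mul_cpow_div (p ν : ℝ) :
    Tendsto (fun ξ : ℂ => (((p : ℂ) - I * ξ) ^ (ν : ℂ)).re / |ξ.re| ^ ν)
      (stripAtInfinity κm κp) (𝓝 (Real.cos (Real.pi * ν / 2))) := by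
  simpa using tendsto_re_cpow_div_abs_im_rpow (z := fun ξ : ℂ => p - I * ξ)
    (by simpa using eventually_re_ne_zero_stripAtInfinity)
    (by simpa using tendsto_add_mul_im_div_abs_re_stripAtInfinity p 1) ν

end StripAtInfinity

lemma weightedKobolPsi_re (μ a b lm lp ν : ℝ) (ξ : ℂ) :
    (weightedKobolPsi μ a b lm lp ν ξ).re =
      μ * ξ.im + a * (((-lm : ℂ) ^ (ν : ℂ)).re - ((-lm - I * ξ) ^ (ν : ℂ)).re)
        + b * (((lp : ℂ) ^ (ν : ℂ)).re - ((lp + I * ξ) ^ (ν : ℂ)).re) := by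
  simp [weightedKobolPsi]

theorem kobol_re_asymptotics_general (μ a b lm lp κm κp : ℝ) {ν : ℝ} (hν : 0 < ν) :
    Tendsto (fun ξ => (weightedKobolPsi μ a b lm lp ν ξ).re / |ξ.re| ^ ν) (stripAtInfinity κm κp)
      (𝓝 (-Real.cos (Real.pi * ν / 2) * (a + b))) := by
  have hpow : Tendsto (fun ξ : ℂ => |ξ.re| ^ ν) (stripAtInfinity κm κp) atTop :=
    (tendsto_rpow_atTop hν).comp tendsto_abs_re_stripAtInfinity
  have hdrift := (tendsto_im_div_stripAtInfinity hpow).const_mul μ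
  have ha := ((hpow.const_div_atTop ((-lm : ℂ) ^ (ν : ℂ)).re).sub
    (tendsto_re_sub_I_mul_cpow_div (-lm) ν)).const_mul a
  have hb := ((hpow.const_div_atTop ((lp : ℂ) ^ (ν : ℂ)).re).sub
    (tendsto_re_add_I_mul_cpow_div lp ν)).const_mul b
  convert (hdrift.add ha).add hb using 2 with ξ
  · rw [weightedKobolPsi_re, ofReal_neg]
    ring
  · ring

theorem kobol_re_asymptotics
    (μ cp cm lm lp ν κm κp : ℝ) (hcp : 0 < cp) (hcm : 0 < cm)
    (hlm : lm < 0) (hlp : 0 < lp)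
    (hν : ν ∈ Set.Ioo (0 : ℝ) 1 ∪ Set.Ioo (1 : ℝ) 2)
    (hκm : lm < κm) (hκm0 : κm < 0) (hκp0 : 0 < κp) (hκp : κp < lp)
    (d : ℝ) (hd : d = -Real.Gamma (-ν) * Real.cos (Real.pi * ν / 2) * (cp + cm)) :
    ∀ ε > (0 : ℝ), ∃ X > (0 : ℝ), ∀ ξ : ℂ,
      ξ.im ∈ Set.Icc κm κp → X ≤ |ξ.re| →
      |(kobolPsi μ cp cm lm lp ν ξ).re / |ξ.re| ^ ν - d| < ε := by
  have hν_pos : 0 < ν := hν.elim And.left fun h => one_pos.trans h.1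
  obtain rfl : d = -Real.cos (Real.pi * ν / 2) *
      (cp * Real.Gamma (-ν) + cm * Real.Gamma (-ν)) := by rw [hd]; ring
  rw [kobolPsi_eq_weightedKobolPsi]
  exact fun ε hε => eventually_stripAtInfinity_iff.mp <|
    Metric.tendsto_nhds.mp (kobol_re_asymptotics_general _ _ _ _ _ _ _ hν_pos) ε hε
end

section
/- Let n ≥ 1, let a ∈ ℝⁿ, and let Φ : ℂⁿ → ℂ be holomorphic on an open set containing the tube T = {z ∈ ℂⁿ : min(0, a_k) ≤ Im z_k ≤ max(0, a_k) for all k}. Assume that for every w in the coordinatewise segment between 0 and a, the function v ↦ Φ(v + iw) (v ∈ ℝⁿ) is Lebesgue integrable, and that Φ(z) → 0 as ‖Re z‖ → ∞ uniformly for z ∈ T. Then for every x ∈ ℝⁿ, ∫_{ℝⁿ} e^{−i⟨x,v⟩} Φ(v) dv = e^{⟨x,a⟩} ∫_{ℝⁿ} e^{−i⟨x,v⟩} Φ(v + ia) dv, where ⟨·,·⟩ is the standard inner product on ℝⁿ and Φ(v + ia) means Φ evaluated at the vector with components v_k + i a_k. -/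
open MeasureTheory Complex

/-!
Fubini reduces the shift from `0` to `a` to shifting one coordinate at a time. In one complex
variable, Cauchy's theorem on the rectangles `[-R, R] × [b, c]` compares the two horizontal
integrals, and the vertical edges disappear as `R → ∞` by the decay assumption. The oscillating
factor `exp (-i⟨x, z⟩)` is entire and bounded on the tube, so it may be absorbed into the integrand;
its value at `v + ia` is `exp ⟨x, a⟩ · exp (-i⟨x, v⟩)`.
-/

section

open Filter Function Set Bornology
open scoped Topology

variable {ι E : Type*} [NormedAddCommGroup E]

section Rectangle

variable [NormedSpace ℂ E] {f : ℂ → E} {b c : ℝ}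

lemma tendsto_integral_vertical_segment_zero {α : Type*} {l : Filter α} {g : α → ℝ}
    (hg : Tendsto g l (cobounded ℝ))
    (hdecay : Tendsto f (comap re (cobounded ℝ) ⊓ 𝓟 (im ⁻¹' uIcc b c)) (𝓝 0)) :
    Tendsto (fun r => ∫ y in b..c, f (g r + y * I)) l (𝓝 0) := by
  rw [Metric.tendsto_nhds]
  intro ε hε
  set δ := ε / (|c - b| + 1) with hδ
  have hδ_pos : 0 < δ := by positivity
  have hsmall : ∀ᶠ s in cobounded ℝ, ∀ z : ℂ, z.re = s → z.im ∈ uIcc b c → ‖f z‖ < δ := by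
    have := Metric.tendsto_nhds.mp hdecay δ hδ_pos
    simpa only [eventually_inf_principal, eventually_comap, dist_zero_right, mem_preimage]
      using this
  filter_upwards [hg.eventually hsmall] with r hr
  have hedge : ∀ y ∈ uIoc b c, ‖f (g r + y * I)‖ ≤ δ := fun y hy =>
    (hr _ (by simp) (by simpa using uIoc_subset_uIcc hy)).le
  calc dist (∫ y in b..c, f (g r + y * I)) 0
      ≤ δ * |c - b| := by
        simpa only [dist_zero_right] using intervalIntegral.norm_integral_le_of_norm_le_const hedge
    _ < δ * (|c - b| + 1) := by gcongr; exact lt_add_one _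
    _ = ε := by rw [hδ]; field_simp

lemma integral_add_mul_I_eq_of_tendsto_zero
    (hf : DifferentiableOn ℂ f (im ⁻¹' uIcc b c))
    (hdecay : Tendsto f (comap re (cobounded ℝ) ⊓ 𝓟 (im ⁻¹' uIcc b c)) (𝓝 0))
    (hb : Integrable fun t : ℝ => f (t + b * I)) (hc : Integrable fun t : ℝ => f (t + c * I)) :
    ∫ t : ℝ, f (t + b * I) = ∫ t : ℝ, f (t + c * I) := by
  have cauchy (R : ℝ) :
      (∫ t in (-R)..R, f (t + b * I)) - ∫ t in (-R)..R, f (t + c * I) =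
        I • (∫ y in b..c, f ((-R : ℝ) + y * I)) - I • ∫ y in b..c, f (R + y * I) := by
    have h := integral_boundary_rect_eq_zero_of_differentiableOn f
      ((-R : ℝ) + b * I) (R + c * I) (hf.mono fun z hz => by simpa using hz.2)
    simp only [add_re, add_im, ofReal_re, ofReal_im, mul_re, mul_im, I_re, I_im, mul_zero, mul_one,
      sub_zero, add_zero, zero_add] at h
    rw [← sub_eq_zero, ← h]
    abel
  have horizontal := (intervalIntegral_tendsto_integral hb tendsto_neg_atTop_atBot tendsto_id).sub
    (intervalIntegral_tendsto_integral hc tendsto_neg_atTop_atBot tendsto_id)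
  have hright : Tendsto id atTop (cobounded ℝ) := IsOrderBornology.atTop_le_cobounded
  have hleft : Tendsto Neg.neg atTop (cobounded ℝ) := tendsto_neg_cobounded.comp hright
  have vertical := ((tendsto_integral_vertical_segment_zero hleft hdecay).const_smul I).sub
    ((tendsto_integral_vertical_segment_zero hright hdecay).const_smul I)
  rw [smul_zero, sub_zero] at vertical
  exact sub_eq_zero.mp (tendsto_nhds_unique (horizontal.congr cauchy) vertical)

end Rectangle

section Coordinate

variable [DecidableEq ι] {X : ι → Type*}

lemma exists_measurePreserving_prod_pi_update [Fintype ι] [∀ i, MeasureSpace (X i)]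
    [∀ i, SigmaFinite (volume : Measure (X i))] (j : ι) :
    ∃ e : X j × (∀ i : {i // i ≠ j}, X i) ≃ᵐ ∀ i, X i,
      MeasurePreserving e ∧ ∀ s t z, e (t, z) = update (e (s, z)) j t := by
  let split := MeasurableEquiv.piEquivPiSubtypeProd X (· = j)
  let single := MeasurableEquiv.piUnique fun i : {i // i = j} => X i
  have hsingle : MeasurePreserving single := volume_preserving_piUnique _
  -- `convert` identifies two distinct `Fintype` instances on `{i // i = j}`.
  have hsplit : MeasurePreserving split := by
    convert volume_preserving_piEquivPiSubtypeProd X (· = j)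
  let coord := split.trans (single.prodCongr (.refl _))
  have coord_apply (v) : coord v = (v j, fun i : {i // i ≠ j} => v i) := rfl
  refine ⟨coord.symm, (hsplit.trans (hsingle.prod (.id volume))).symm _, fun s t z => ?_⟩
  have hz (i : {i // i ≠ j}) : coord.symm (s, z) i = z i :=
    congrFun (congrArg Prod.snd (coord.apply_symm_apply (s, z))) i
  rw [MeasurableEquiv.symm_apply_eq, coord_apply, update_self]
  exact congrArg (t, ·) (funext fun i => by rw [update_of_ne i.2, hz])

lemma integral_eq_of_integral_update_eq [Fintype ι] [NormedSpace ℝ E] [∀ i, MeasureSpace (X i)]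
    [∀ i, SigmaFinite (volume : Measure (X i))] (j : ι) {f g : (∀ i, X i) → E}
    (hf : Integrable f) (hg : Integrable g)
    (hfg : ∀ y, Integrable (fun t => f (update y j t)) → Integrable (fun t => g (update y j t)) →
      ∫ t, f (update y j t) = ∫ t, g (update y j t)) :
    ∫ v, f v = ∫ v, g v := by
  obtain ⟨e, he, he_update⟩ := exists_measurePreserving_prod_pi_update (X := X) j
  have hfe : Integrable fun p => f (e p) := (he.integrable_comp_emb e.measurableEmbedding).mpr hf
  have hge : Integrable fun p => g (e p) := (he.integrable_comp_emb e.measurableEmbedding).mpr hg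
  rw [← he.integral_comp', ← he.integral_comp', Measure.volume_eq_prod,
    integral_prod_symm _ hfe, integral_prod_symm _ hge]
  refine integral_congr_ae ?_
  filter_upwards [hfe.prod_left_ae, hge.prod_left_ae] with z hfz hgz
  rcases isEmpty_or_nonempty (X j) with _ | ⟨⟨s⟩⟩
  · simp only [integral_of_isEmpty]
  · obtain ⟨y, hy⟩ : ∃ y, ∀ t, e (t, z) = update y j t := ⟨_, fun t => he_update s t z⟩
    simp only [hy] at hfz hgz ⊢
    exact hfg y hfz hgz

lemma tendsto_update_cobounded [∀ i, Bornology (X i)] (y : ∀ i, X i) (j : ι) :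
    Tendsto (update y j) (cobounded (X j)) (cobounded (∀ i, X i)) := by
  have heval : Tendsto (eval j ∘ update y j) (cobounded (X j)) (cobounded (X j)) :=
    tendsto_id.congr fun t => (update_self j t y).symm
  rw [cobounded_pi]
  exact (tendsto_comap_iff.mpr heval).mono_right
    (le_iSup (fun i => comap (eval i) (cobounded (X i))) j)

end Coordinate

/-- The vector `v + iw` of `ℂ^ι` with real part `v` and imaginary part `w`. -/
def ofReIm (v w : ι → ℝ) : ι → ℂ := fun k => (v k : ℂ) + I * (w k : ℂ)

/-- The closed tube of vectors whose imaginary part lies in the box with opposite corners `a`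
and `b`; no order between `a k` and `b k` is assumed. -/
def imTube (a b : ι → ℝ) : Set (ι → ℂ) := {z | ∀ k, (z k).im ∈ uIcc (a k) (b k)}

/-- The filter on `ℂ^ι` of vectors in `S` whose real part tends to infinity. A limit along it is a
limit as `‖Re z‖ → ∞`, uniform in `z ∈ S`, and does not depend on the choice of norm. -/
def reAtInfinity (S : Set (ι → ℂ)) : Filter (ι → ℂ) :=
  comap (fun z k => (z k).re) (cobounded (ι → ℝ)) ⊓ 𝓟 S

/-- The plane wave `z ↦ exp (-i⟨x, z⟩)` on `ℂ^ι`, with the bilinear extension of `⟨x, ·⟩`. -/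
noncomputable def planeWave [Fintype ι] (x : ι → ℝ) (z : ι → ℂ) : ℂ := exp (-I * ∑ k, x k * z k)

variable {a b : ι → ℝ}

lemma imTube_subset_imTube {a' b' : ι → ℝ} (ha : a ∈ univ.pi fun k => uIcc (a' k) (b' k))
    (hb : b ∈ univ.pi fun k => uIcc (a' k) (b' k)) : imTube a b ⊆ imTube a' b' :=
  fun _ hz k => uIcc_subset_uIcc (ha k trivial) (hb k trivial) (hz k)

lemma reAtInfinity_mono {S T : Set (ι → ℂ)} (h : S ⊆ T) : reAtInfinity S ≤ reAtInfinity T :=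
  inf_le_inf_left _ (principal_mono.mpr h)

section CoordinateLine

variable [DecidableEq ι]

lemma ofReIm_update (v w : ι → ℝ) (j : ι) (t c : ℝ) :
    ofReIm (update v j t) (update w j c) = update (ofReIm v w) j (t + c * I) := by
  ext k
  rw [mul_comm (c : ℂ)]
  exact apply_update₂ (fun _ (p q : ℝ) => (p : ℂ) + I * (q : ℂ)) v w j t c k

lemma mapsTo_update_ofReIm_imTube (y w : ι → ℝ) (j : ι) (c : ℝ) :
    MapsTo (update (ofReIm y w) j) (im ⁻¹' uIcc (w j) c) (imTube w (update w j c)) := by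
  intro z hz k
  rcases eq_or_ne k j with rfl | hk
  · simpa using hz
  · simp [hk, ofReIm]

lemma tendsto_update_ofReIm_reAtInfinity (y w : ι → ℝ) (j : ι) (c : ℝ) :
    Tendsto (update (ofReIm y w) j) (comap re (cobounded ℝ) ⊓ 𝓟 (im ⁻¹' uIcc (w j) c))
      (reAtInfinity (imTube w (update w j c))) := by
  refine .inf (tendsto_comap_iff.mpr ?_)
    (tendsto_principal_principal.mpr (mapsTo_update_ofReIm_imTube y w j c))
  have re_update : (fun z k => (z k).re) ∘ update (ofReIm y w) j = update y j ∘ re := by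
    ext z k
    rcases eq_or_ne k j with rfl | hk
    · simp
    · simp [hk, ofReIm]
  rw [re_update]
  exact (tendsto_update_cobounded y j).comp tendsto_comap

lemma integral_ofReIm_update_eq [Fintype ι] [NormedSpace ℂ E] {Φ : (ι → ℂ) → E} {w : ι → ℝ}
    {j : ι} {c : ℝ}
    (hΦ : DifferentiableOn ℂ Φ (imTube w (update w j c)))
    (hdecay : Tendsto Φ (reAtInfinity (imTube w (update w j c))) (𝓝 0))
    (hw : Integrable fun v => Φ (ofReIm v w))
    (hc : Integrable fun v => Φ (ofReIm v (update w j c))) :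
    ∫ v, Φ (ofReIm v w) = ∫ v, Φ (ofReIm v (update w j c)) := by
  refine integral_eq_of_integral_update_eq j hw hc fun y hyw hyc => ?_
  have ofReIm_line (t : ℝ) : ofReIm (update y j t) w = update (ofReIm y w) j (t + w j * I) := by
    simpa only [update_eq_self] using ofReIm_update y w j t (w j)
  simp only [ofReIm_line, ofReIm_update] at hyw hyc ⊢
  have hline : Differentiable ℂ (update (ofReIm y w) j) := fun z =>
    (hasDerivAt_update _ j z).differentiableAt
  exact integral_add_mul_I_eq_of_tendsto_zero (f := Φ ∘ update (ofReIm y w) j)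
    (hΦ.comp hline.differentiableOn (mapsTo_update_ofReIm_imTube y w j c))
    (hdecay.comp (tendsto_update_ofReIm_reAtInfinity y w j c)) hyw hyc

end CoordinateLine

variable [Fintype ι]

theorem integral_ofReIm_eq_of_tendsto_zero [NormedSpace ℂ E] {Φ : (ι → ℂ) → E}
    (hΦ : DifferentiableOn ℂ Φ (imTube a b))
    (hint : ∀ w ∈ univ.pi fun k => {a k, b k}, Integrable fun v => Φ (ofReIm v w))
    (hdecay : Tendsto Φ (reAtInfinity (imTube a b)) (𝓝 0)) :
    ∫ v, Φ (ofReIm v a) = ∫ v, Φ (ofReIm v b) := by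
  classical
  have vertex (s : Finset ι) : s.piecewise b a ∈ univ.pi fun k => {a k, b k} :=
    s.piecewise_mem_set_pi (fun k _ => by simp) (fun k _ => by simp)
  have vertex_mem_box (s : Finset ι) : s.piecewise b a ∈ univ.pi fun k => uIcc (a k) (b k) :=
    pi_mono (fun k _ => pair_subset left_mem_uIcc right_mem_uIcc) (vertex s)
  suffices ∀ s : Finset ι, ∫ v, Φ (ofReIm v a) = ∫ v, Φ (ofReIm v (s.piecewise b a)) by
    simpa using this Finset.univ
  intro s
  induction s using Finset.induction_on with
  | empty => simp
  | insert j s _ ih =>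
    have hvertex := vertex (insert j s)
    have hbox := vertex_mem_box (insert j s)
    rw [Finset.piecewise_insert] at hvertex hbox ⊢
    have hsub := imTube_subset_imTube (vertex_mem_box s) hbox
    exact ih.trans (integral_ofReIm_update_eq (hΦ.mono hsub)
      (hdecay.mono_left (reAtInfinity_mono hsub)) (hint _ (vertex s)) (hint _ hvertex))

section PlaneWave

variable (x : ι → ℝ)

lemma differentiable_planeWave : Differentiable ℂ (planeWave x) := by
  unfold planeWave
  fun_prop

lemma norm_planeWave (z : ι → ℂ) : ‖planeWave x z‖ = Real.exp (∑ k, x k * (z k).im) := by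
  simp [planeWave, norm_exp]

lemma planeWave_ofReIm (v w : ι → ℝ) :
    planeWave x (ofReIm v w) =
      Real.exp (∑ k, x k * w k) * exp (-I * (∑ k, x k * v k : ℝ)) := by
  rw [planeWave, ofReal_exp, ← exp_add]
  congr 1
  push_cast
  simp only [ofReIm, mul_add, Finset.sum_add_distrib, Finset.mul_sum]
  rw [add_comm]
  congr 1
  refine Finset.sum_congr rfl fun k _ => ?_
  linear_combination (-(x k : ℂ) * w k) * I_mul_I

lemma exists_norm_planeWave_le (a b : ι → ℝ) : ∃ C, ∀ z ∈ imTube a b, ‖planeWave x z‖ ≤ C := by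
  have hbox : IsCompact (univ.pi fun k => uIcc (a k) (b k)) :=
    isCompact_univ_pi fun _ => isCompact_uIcc
  obtain ⟨C, hC⟩ := hbox.bddAbove_image (f := fun w => Real.exp (∑ k, x k * w k)) (by fun_prop)
  refine ⟨C, fun z hz => ?_⟩
  rw [norm_planeWave]
  exact hC ⟨fun k => (z k).im, fun k _ => hz k, rfl⟩

lemma integrable_planeWave_smul [NormedSpace ℂ E] {Φ : (ι → ℂ) → E} {w : ι → ℝ}
    (h : Integrable fun v => Φ (ofReIm v w)) :
    Integrable fun v => planeWave x (ofReIm v w) • Φ (ofReIm v w) := by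
  refine h.bdd_smul (Real.exp (∑ k, x k * w k)) ?_ (.of_forall fun v => ?_)
  · have : Continuous fun v => ofReIm v w := by unfold ofReIm; fun_prop
    exact ((differentiable_planeWave x).continuous.comp this).aestronglyMeasurable
  · simp [norm_planeWave, ofReIm]

lemma tendsto_planeWave_smul_zero [NormedSpace ℂ E] {Φ : (ι → ℂ) → E}
    (h : Tendsto Φ (reAtInfinity (imTube a b)) (𝓝 0)) :
    Tendsto (fun z => planeWave x z • Φ z) (reAtInfinity (imTube a b)) (𝓝 0) := by
  obtain ⟨C, hC⟩ := exists_norm_planeWave_le x a b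
  have hmem : ∀ᶠ z in reAtInfinity (imTube a b), z ∈ imTube a b :=
    mem_inf_of_right (mem_principal_self _)
  exact IsBoundedUnder.smul_tendsto_zero (isBoundedUnder_of_eventually_le (hmem.mono hC)) h

end PlaneWave

lemma tendsto_reAtInfinity_zero {S : Set (ι → ℂ)} {Φ : (ι → ℂ) → E}
    (h : ∀ ε > (0 : ℝ), ∃ R : ℝ, ∀ z ∈ S, R ≤ √(∑ k, (z k).re ^ 2) → ‖Φ z‖ < ε) :
    Tendsto Φ (reAtInfinity S) (𝓝 0) := by
  rw [Metric.tendsto_nhds]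
  intro ε hε
  obtain ⟨R, hR⟩ := h ε hε
  have norm_le_sqrt (u : ι → ℝ) : ‖u‖ ≤ √(∑ k, u k ^ 2) :=
    (pi_norm_le_iff_of_nonneg (Real.sqrt_nonneg _)).mpr fun k => Real.abs_le_sqrt
      (Finset.single_le_sum (f := fun k => u k ^ 2) (fun _ _ => sq_nonneg _) (Finset.mem_univ k))
  rw [reAtInfinity, eventually_inf_principal, eventually_comap]
  filter_upwards [tendsto_norm_cobounded_atTop.eventually_ge_atTop R] with u hu z hzu hz
  rw [dist_zero_right]
  exact hR z hz (hu.trans (by simpa only [← hzu] using norm_le_sqrt u))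

theorem contour_shift_tube_general [NormedSpace ℂ E] [CompleteSpace E] {Φ : (ι → ℂ) → E}
    (hΦ : DifferentiableOn ℂ Φ (imTube a b))
    (hint : ∀ w ∈ univ.pi fun k => {a k, b k}, Integrable fun v => Φ (ofReIm v w))
    (hdecay : Tendsto Φ (reAtInfinity (imTube a b)) (𝓝 0)) (x : ι → ℝ) :
    (Real.exp (∑ k, x k * a k) : ℂ) •
        ∫ v : ι → ℝ, exp (-I * (∑ k, x k * v k : ℝ)) • Φ (ofReIm v a) =
      (Real.exp (∑ k, x k * b k) : ℂ) •
        ∫ v : ι → ℝ, exp (-I * (∑ k, x k * v k : ℝ)) • Φ (ofReIm v b) := by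
  have h := integral_ofReIm_eq_of_tendsto_zero
    ((differentiable_planeWave x).differentiableOn.smul hΦ)
    (fun w hw => integrable_planeWave_smul x (hint w hw)) (tendsto_planeWave_smul_zero x hdecay)
  simpa only [Pi.smul_apply', planeWave_ofReIm, mul_smul, integral_smul] using h

end

theorem contour_shift_tube
    (n : ℕ) (hn : 1 ≤ n) (a : Fin n → ℝ) (Φ : (Fin n → ℂ) → ℂ)
    (T : Set (Fin n → ℂ))
    (hT : T = {z : Fin n → ℂ | ∀ k, min 0 (a k) ≤ (z k).im ∧ (z k).im ≤ max 0 (a k)})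
    (hol : ∃ U : Set (Fin n → ℂ), IsOpen U ∧ T ⊆ U ∧ DifferentiableOn ℂ Φ U)
    (hint : ∀ w : Fin n → ℝ,
      (∀ k, min 0 (a k) ≤ w k ∧ w k ≤ max 0 (a k)) →
      Integrable (fun v : Fin n → ℝ => Φ (fun k => (v k : ℂ) + Complex.I * (w k : ℂ))))
    (hdecay : ∀ ε > (0 : ℝ), ∃ R : ℝ, ∀ z ∈ T,
      R ≤ Real.sqrt (∑ k, (z k).re ^ 2) → ‖Φ z‖ < ε) :
    ∀ x : Fin n → ℝ,
      (∫ v : Fin n → ℝ,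
          Complex.exp (-Complex.I * (∑ k, x k * v k : ℝ)) * Φ (fun k => (v k : ℂ)))
        = Real.exp (∑ k, x k * a k) *
          ∫ v : Fin n → ℝ,
            Complex.exp (-Complex.I * (∑ k, x k * v k : ℝ)) *
              Φ (fun k => (v k : ℂ) + Complex.I * (a k : ℂ)) := by
  subst hT
  obtain ⟨U, -, hTU, hΦ⟩ := hol
  intro x
  have h := contour_shift_tube_general (a := 0) (b := a) (hΦ.mono hTU)
    (fun w hw => hint w fun k =>
      Set.pair_subset Set.left_mem_uIcc Set.right_mem_uIcc (hw k trivial))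
    (tendsto_reAtInfinity_zero hdecay) x
  unfold ofReIm at h
  simpa using h
end

section
/- Let n ≥ 1 and let a > 0 be real. Let Φ : ℂⁿ → ℂ be holomorphic on an open set containing the tube T = {z ∈ ℂⁿ : −a ≤ Im z_k ≤ a for all k}; assume that for every w ∈ [−a, a]ⁿ the function v ↦ Φ(v + iw) is Lebesgue integrable on ℝⁿ, and that Φ(z) → 0 as ‖Re z‖ → ∞ uniformly for z ∈ T. Define p(x) = (2π)^{−n} ∫_{ℝⁿ} e^{−i⟨x,v⟩} Φ(v) dv, write 𝐚 = (a,…,a) ∈ ℝⁿ, and set M = (1/(2(2π)^{n})) ∫_{ℝⁿ} |Φ(v + i𝐚) + Φ(v − i𝐚)| dv. Then for every x ∈ ℝⁿ, |p(x)| ≤ M / cosh⟨x,𝐚⟩. -/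
open MeasureTheory Complex

/-!
By Cauchy's theorem on rectangles, a function on a strip of `ℂ` that decays at infinity has the same
integral along its two boundary lines. Foliating `ℝ^ι` by the lines parallel to `w' - w` turns this
into `∫ Ψ(v + iw) dv = ∫ Ψ(v + iw') dv` for `Ψ` holomorphic and decaying on the tube over the
segment from `w` to `w'`. For `Ψ(z) = exp(-i⟨x, z⟩) Φ(z)`, moving `ℝ^ι` to height `±a` multiplies
the Fourier integral of `Φ` by `exp(∓⟨x, a⟩)`. Adding the two heights produces the factor
`2 cosh⟨x, a⟩`, while `|exp(-i⟨x, v⟩)| = 1` bounds the sum by the integral of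
`‖Φ(v + ia) + Φ(v - ia)‖`.
-/

open Set Filter Topology Bornology Interval

section HorizontalLines

variable {E : Type*} [NormedAddCommGroup E] [NormedSpace ℂ E] {g : ℂ → E} {b c : ℝ}

theorem tendsto_integral_vertical_segment
    (hg : Tendsto g (comap re (cocompact ℝ) ⊓ 𝓟 (im ⁻¹' [[b, c]])) (𝓝 0)) :
    Tendsto (fun q : ℝ => ∫ y in b..c, g (q + y * I)) (cocompact ℝ) (𝓝 0) := by
  rw [NormedAddGroup.tendsto_nhds_zero]
  intro ε hε
  obtain ⟨δ, hδ, hδε⟩ := exists_pos_mul_lt hε |c - b|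
  have hsmall : ∀ᶠ q : ℝ in cocompact ℝ, ∀ z : ℂ, z.re = q → z.im ∈ [[b, c]] → ‖g z‖ < δ :=
    eventually_comap.1 <| eventually_inf_principal.1 <|
      NormedAddGroup.tendsto_nhds_zero.1 hg δ hδ
  filter_upwards [hsmall] with q hq
  calc ‖∫ y in b..c, g (q + y * I)‖ ≤ δ * |c - b| :=
        intervalIntegral.norm_integral_le_of_norm_le_const fun y hy =>
          (hq _ (by simp) (by simpa using uIoc_subset_uIcc hy)).le
    _ < ε := by rwa [mul_comm]

theorem integral_horizontal_line_eq (hd : DifferentiableOn ℂ g (im ⁻¹' [[b, c]]))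
    (hg : Tendsto g (comap re (cocompact ℝ) ⊓ 𝓟 (im ⁻¹' [[b, c]])) (𝓝 0))
    (hb : Integrable fun s : ℝ => g (s + b * I)) (hc : Integrable fun s : ℝ => g (s + c * I)) :
    ∫ s : ℝ, g (s + b * I) = ∫ s : ℝ, g (s + c * I) := by
  have hvert := tendsto_integral_vertical_segment hg
  have hsides : Tendsto (fun r : ℝ => I • (∫ y in b..c, g (((-r : ℝ) : ℂ) + y * I)) -
      I • ∫ y in b..c, g (r + y * I)) atTop (𝓝 0) := by
    simpa using ((hvert.comp (tendsto_neg_atTop_atBot.mono_right atBot_le_cocompact)).const_smul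
      I).sub ((hvert.mono_left atTop_le_cocompact).const_smul I)
  have hlines := (intervalIntegral_tendsto_integral hb tendsto_neg_atTop_atBot tendsto_id).sub
    (intervalIntegral_tendsto_integral hc tendsto_neg_atTop_atBot tendsto_id)
  refine sub_eq_zero.1 (tendsto_nhds_unique hlines (hsides.congr fun r => ?_))
  have hrect := integral_boundary_rect_eq_zero_of_differentiableOn g ⟨-r, b⟩ ⟨r, c⟩
    (hd.mono fun z hz => hz.2)
  refine (eq_of_sub_eq_zero (Eq.trans ?_ hrect)).symm
  simp only [id_eq]
  abel

end HorizontalLines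

section ParallelLines

variable {V : Type*} [NormedAddCommGroup V] [NormedSpace ℝ V] [MeasurableSpace V] [BorelSpace V]
  [SecondCountableTopology V] {μ : Measure V} [SFinite μ] [μ.IsAddRightInvariant] {a : V}

/- Every line in direction `a` meets the slab `0 < ℓ ≤ 1` in a segment of parameter length `1`, so
the slab serves as a space of lines without choosing a complement of `ℝ a` and a measure on it. -/
theorem measurePreserving_add_smul_slab {ℓ : V →L[ℝ] ℝ} (hℓ : ℓ a = 1) :
    MeasurePreserving (fun q : V × ℝ => q.1 + q.2 • a)
      ((μ.restrict (ℓ ⁻¹' Ioc 0 1)).prod volume) μ := by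
  have hmeas : Measurable fun q : V × ℝ => q.1 + q.2 • a := by fun_prop
  have hslab : MeasurableSet (ℓ ⁻¹' Ioc 0 1) := ℓ.continuous.measurable measurableSet_Ioc
  refine ⟨hmeas, Measure.ext fun A hA => ?_⟩
  have hsheared : MeasurableSet {q : V × ℝ | q.1 ∈ A ∧ ℓ q.1 - q.2 ∈ Ioc (0 : ℝ) 1} :=
    (measurable_fst hA).inter
      ((by fun_prop : Measurable fun q : V × ℝ => ℓ q.1 - q.2) measurableSet_Ioc)
  have hlength (v : V) : volume ((ℓ v - ·) ⁻¹' Ioc (0 : ℝ) 1) = 1 := by simp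
  rw [Measure.map_apply hmeas hA, Measure.prod_apply_symm (hmeas hA)]
  calc ∫⁻ s : ℝ, μ.restrict (ℓ ⁻¹' Ioc 0 1) {v | v + s • a ∈ A}
      = ∫⁻ s : ℝ, μ {v | v ∈ A ∧ ℓ v - s ∈ Ioc (0 : ℝ) 1} := by
        refine lintegral_congr fun s => ?_
        rw [Measure.restrict_apply' hslab, ← measure_preimage_add_right μ (s • a)
          {v | v ∈ A ∧ ℓ v - s ∈ Ioc (0 : ℝ) 1}]
        congr 1
        ext v
        simp only [mem_inter_iff, mem_preimage, mem_ofPred_eq, map_add, map_smul, hℓ, smul_eq_mul,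
          mul_one, add_sub_cancel_right]
    _ = ∫⁻ v, volume {s : ℝ | v ∈ A ∧ ℓ v - s ∈ Ioc (0 : ℝ) 1} ∂μ :=
        (Measure.prod_apply_symm hsheared).symm.trans (Measure.prod_apply hsheared)
    _ = ∫⁻ v, A.indicator 1 v ∂μ := by
        refine lintegral_congr fun v => ?_
        by_cases hv : v ∈ A
        · simpa only [hv, true_and, indicator_of_mem, Pi.one_apply, preimage] using hlength v
        · simp [hv]
    _ = μ A := lintegral_indicator_one hA

theorem integral_eq_of_integral_line_eq {E : Type*} [NormedAddCommGroup E] [NormedSpace ℝ E]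
    (ha : a ≠ 0) {f g : V → E} (hf : Integrable f μ) (hg : Integrable g μ)
    (hline : ∀ v, Integrable (fun s : ℝ => f (v + s • a)) →
      Integrable (fun s : ℝ => g (v + s • a)) →
        ∫ s : ℝ, f (v + s • a) = ∫ s : ℝ, g (v + s • a)) :
    ∫ v, f v ∂μ = ∫ v, g v ∂μ := by
  obtain ⟨ℓ, hℓ⟩ := SeparatingDual.exists_eq_one (R := ℝ) ha
  have hmp := measurePreserving_add_smul_slab (μ := μ) hℓ
  have hfubini {h : V → E} (hh : Integrable h μ) :
      ∫ v, h v ∂μ = ∫ v in ℓ ⁻¹' Ioc 0 1, (∫ s : ℝ, h (v + s • a)) ∂μ := by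
    refine Eq.trans ?_ (integral_prod _ (hmp.integrable_comp_of_integrable hh))
    nth_rw 1 [← hmp.map_eq]
    exact integral_map hmp.measurable.aemeasurable (hmp.map_eq.symm ▸ hh.aestronglyMeasurable)
  rw [hfubini hf, hfubini hg]
  refine integral_congr_ae ?_
  filter_upwards [(hmp.integrable_comp_of_integrable hf).prod_right_ae,
    (hmp.integrable_comp_of_integrable hg).prod_right_ae] with v hfv hgv
  exact hline v hfv hgv

end ParallelLines

section Tube

variable {ι : Type*}

/-- The tube domain `ℝ^ι + iB` over the base `B`. -/
def tubeDomain (B : Set (ι → ℝ)) : Set (ι → ℂ) :=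
  {z | (fun k => (z k).im) ∈ B}

/-- The filter of the points of the tube over `B` whose real part tends to infinity: convergence
along it is convergence as `Re z → ∞`, uniformly in the tube. -/
def tubeAtInfty (B : Set (ι → ℝ)) : Filter (ι → ℂ) :=
  comap (fun z k => (z k).re) (cocompact (ι → ℝ)) ⊓ 𝓟 (tubeDomain B)

theorem tubeDomain_mono {B C : Set (ι → ℝ)} (h : B ⊆ C) : tubeDomain B ⊆ tubeDomain C :=
  fun _ hz => h hz

theorem tubeAtInfty_mono {B C : Set (ι → ℝ)} (h : B ⊆ C) : tubeAtInfty B ≤ tubeAtInfty C :=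
  inf_le_inf_left _ (principal_mono.2 (tubeDomain_mono h))

theorem tendsto_tubeAtInfty_of_forall_sqrt_le [Fintype ι] {E : Type*} [NormedAddCommGroup E]
    {Φ : (ι → ℂ) → E} {B : Set (ι → ℝ)}
    (h : ∀ ε > 0, ∃ R : ℝ, ∀ z ∈ tubeDomain B, R ≤ √(∑ k, (z k).re ^ 2) → ‖Φ z‖ < ε) :
    Tendsto Φ (tubeAtInfty B) (𝓝 0) := by
  rw [NormedAddGroup.tendsto_nhds_zero]
  intro ε hε
  obtain ⟨R, hR⟩ := h ε hε
  have hfar : ∀ᶠ u : ι → ℝ in cocompact (ι → ℝ), R ≤ ‖u‖ :=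
    tendsto_norm_cocompact_atTop.eventually_ge_atTop R
  refine eventually_inf_principal.2 ((hfar.comap _).mono fun z hRz hz => hR z hz (hRz.trans ?_))
  refine (pi_norm_le_iff_of_nonneg (Real.sqrt_nonneg _)).2 fun k => Real.abs_le_sqrt ?_
  exact Finset.single_le_sum (f := fun k => (z k).re ^ 2) (fun _ _ => sq_nonneg _)
    (Finset.mem_univ k)

/-- The complexification, translated by `v + iw`, of the real line in direction `w' - w`. It maps
the horizontal lines of heights `0` and `1` into `ℝ^ι + iw` and `ℝ^ι + iw'`. -/
def tubeLine (v w w' : ι → ℝ) (z : ℂ) : ι → ℂ :=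
  fun k => (v k + I * w k) + z * (w' k - w k)

theorem tubeLine_add_mul_I (v w w' : ι → ℝ) (s t : ℝ) :
    tubeLine v w w' (s + t * I) =
      fun k => ((v + s • (w' - w)) k : ℂ) + I * (AffineMap.lineMap w w' t k : ℝ) := by
  ext k
  simp only [tubeLine, AffineMap.lineMap_apply_module', Pi.add_apply, Pi.smul_apply, Pi.sub_apply,
    smul_eq_mul]
  push_cast
  ring

theorem mapsTo_tubeLine (v w w' : ι → ℝ) :
    MapsTo (tubeLine v w w') (im ⁻¹' [[0, 1]]) (tubeDomain (segment ℝ w w')) := by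
  intro z hz
  rw [uIcc_of_le zero_le_one] at hz
  rw [tubeDomain, segment_eq_image']
  exact ⟨z.im, hz, by ext k; simp [tubeLine]⟩

theorem tendsto_tubeLine (v : ι → ℝ) {w w' : ι → ℝ} (hww' : w ≠ w') :
    Tendsto (tubeLine v w w') (comap re (cocompact ℝ) ⊓ 𝓟 (im ⁻¹' [[0, 1]]))
      (tubeAtInfty (segment ℝ w w')) := by
  have hescape : Tendsto (fun s : ℝ => v + s • (w' - w)) (cocompact ℝ) (cocompact (ι → ℝ)) :=
    ((Homeomorph.addLeft v).isClosedEmbedding.comp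
      (isClosedEmbedding_smul_left (sub_ne_zero.2 hww'.symm))).tendsto_cocompact
  have hre : Tendsto (fun z k => (tubeLine v w w' z k).re) (comap re (cocompact ℝ))
      (cocompact (ι → ℝ)) :=
    (hescape.comp tendsto_comap).congr fun z => by ext k; simp [tubeLine]
  exact (tendsto_comap_iff.2 hre).inf (tendsto_principal_principal.2 (mapsTo_tubeLine v w w'))

theorem differentiable_tubeLine (v w w' : ι → ℝ) : Differentiable ℂ (tubeLine v w w') := by
  unfold tubeLine
  fun_prop

theorem integral_tube_eq [Fintype ι] {E : Type*} [NormedAddCommGroup E] [NormedSpace ℂ E]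
    {Φ : (ι → ℂ) → E} {w w' : ι → ℝ}
    (hd : DifferentiableOn ℂ Φ (tubeDomain (segment ℝ w w')))
    (hdecay : Tendsto Φ (tubeAtInfty (segment ℝ w w')) (𝓝 0))
    (hw : Integrable fun v : ι → ℝ => Φ fun k => (v k : ℂ) + I * w k)
    (hw' : Integrable fun v : ι → ℝ => Φ fun k => (v k : ℂ) + I * w' k) :
    ∫ v : ι → ℝ, Φ (fun k => (v k : ℂ) + I * w k) =
      ∫ v : ι → ℝ, Φ (fun k => (v k : ℂ) + I * w' k) := by
  obtain rfl | hww' := eq_or_ne w w'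
  · rfl
  · refine integral_eq_of_integral_line_eq (sub_ne_zero.2 hww'.symm) hw hw' fun v hvw hvw' => ?_
    have hheight_zero (s : ℝ) := tubeLine_add_mul_I v w w' s 0
    have hheight_one (s : ℝ) := tubeLine_add_mul_I v w w' s 1
    simp only [AffineMap.lineMap_apply_zero] at hheight_zero
    simp only [AffineMap.lineMap_apply_one] at hheight_one
    simp only [← hheight_zero, ← hheight_one] at hvw hvw' ⊢
    exact integral_horizontal_line_eq
      (hd.comp (differentiable_tubeLine v w w').differentiableOn (mapsTo_tubeLine v w w'))
      (hdecay.comp (tendsto_tubeLine v hww')) hvw hvw'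

end Tube

section FourierIntegral

variable {ι : Type*} [Fintype ι] {E : Type*} [NormedAddCommGroup E] [NormedSpace ℂ E]

theorem cexp_neg_I_mul_sum_add_I_mul (x v w : ι → ℝ) :
    cexp (-I * ∑ k, x k * ((v k : ℂ) + I * w k)) =
      Real.exp (∑ k, x k * w k) * cexp (-I * (∑ k, x k * v k : ℝ)) := by
  rw [ofReal_exp, ← Complex.exp_add]
  congr 1
  push_cast
  simp only [Finset.mul_sum, ← Finset.sum_add_distrib]
  exact Finset.sum_congr rfl fun k _ => by linear_combination (-(x k : ℂ) * w k) * I_mul_I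

theorem norm_cexp_neg_I_mul_sum (x : ι → ℝ) (z : ι → ℂ) :
    ‖cexp (-I * ∑ k, (x k : ℂ) * z k)‖ = Real.exp (∑ k, x k * (z k).im) := by
  simp [Complex.norm_exp, im_sum]

theorem integrable_cexp_neg_I_mul_sum_smul {f : (ι → ℝ) → E} (hf : Integrable f) (x : ι → ℝ) :
    Integrable fun v : ι → ℝ => cexp (-I * (∑ k, x k * v k : ℝ)) • f v :=
  hf.bdd_smul 1 (by fun_prop : Continuous _).aestronglyMeasurable
    (.of_forall fun v => by simp [Complex.norm_exp])

theorem tendsto_cexp_smul_tubeAtInfty {Φ : (ι → ℂ) → E} {B : Set (ι → ℝ)} (hB : IsBounded B)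
    (hΦ : Tendsto Φ (tubeAtInfty B) (𝓝 0)) (x : ι → ℝ) :
    Tendsto (fun z => cexp (-I * ∑ k, (x k : ℂ) * z k) • Φ z) (tubeAtInfty B) (𝓝 0) := by
  obtain ⟨K, hK⟩ := (hB.isCompact_closure.image
    (by fun_prop : Continuous fun w : ι → ℝ => Real.exp (∑ k, x k * w k))).bddAbove
  refine IsBoundedUnder.smul_tendsto_zero (isBoundedUnder_of_eventually_le (a := K) ?_) hΦ
  refine eventually_inf_principal.2 (.of_forall fun z hz => ?_)
  simpa only [Function.comp_apply, norm_cexp_neg_I_mul_sum] using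
    hK (mem_image_of_mem _ (subset_closure hz))

theorem integral_cexp_smul_add_I_mul {Φ : (ι → ℂ) → E} {w : ι → ℝ}
    (hd : DifferentiableOn ℂ Φ (tubeDomain (segment ℝ 0 w)))
    (hdecay : Tendsto Φ (tubeAtInfty (segment ℝ 0 w)) (𝓝 0))
    (h0 : Integrable fun v : ι → ℝ => Φ fun k => (v k : ℂ))
    (hw : Integrable fun v : ι → ℝ => Φ fun k => (v k : ℂ) + I * w k) (x : ι → ℝ) :
    ∫ v : ι → ℝ, cexp (-I * (∑ k, x k * v k : ℝ)) • Φ (fun k => (v k : ℂ) + I * w k) =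
      Real.exp (-∑ k, x k * w k) •
        ∫ v : ι → ℝ, cexp (-I * (∑ k, x k * v k : ℝ)) • Φ (fun k => (v k : ℂ)) := by
  have htwist (u v : ι → ℝ) : cexp (-I * ∑ k, (x k : ℂ) * ((v k : ℂ) + I * u k)) •
      Φ (fun k => (v k : ℂ) + I * u k) = Real.exp (∑ k, x k * u k) •
        cexp (-I * (∑ k, x k * v k : ℝ)) • Φ (fun k => (v k : ℂ) + I * u k) := by
    rw [cexp_neg_I_mul_sum_add_I_mul, mul_smul, Complex.coe_smul]
  have htwist_integrable {u : ι → ℝ}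
      (hu : Integrable fun v : ι → ℝ => Φ fun k => (v k : ℂ) + I * u k) :
      Integrable fun v : ι → ℝ => cexp (-I * ∑ k, (x k : ℂ) * ((v k : ℂ) + I * u k)) •
        Φ (fun k => (v k : ℂ) + I * u k) := by
    simp only [htwist]
    exact (integrable_cexp_neg_I_mul_sum_smul hu x).smul _
  have hshift := integral_tube_eq (Φ := fun z => cexp (-I * ∑ k, (x k : ℂ) * z k) • Φ z)
    (.smul (by fun_prop) hd)
    (tendsto_cexp_smul_tubeAtInfty
      (Metric.isBounded_closedBall.subset (segment_subset_closedBall_left 0 w)) hdecay x)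
    (htwist_integrable (u := 0) (by simpa using h0)) (htwist_integrable hw)
  simp only [htwist, integral_smul] at hshift
  rw [Real.exp_neg, eq_inv_smul_iff₀ (Real.exp_ne_zero _), ← hshift]
  simp

theorem two_mul_cosh_smul_integral_cexp_smul {Φ : (ι → ℂ) → E} {a : ι → ℝ}
    (hd : DifferentiableOn ℂ Φ (tubeDomain (segment ℝ (-a) a)))
    (hdecay : Tendsto Φ (tubeAtInfty (segment ℝ (-a) a)) (𝓝 0))
    (h0 : Integrable fun v : ι → ℝ => Φ fun k => (v k : ℂ))
    (hadd : Integrable fun v : ι → ℝ => Φ fun k => (v k : ℂ) + I * a k)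
    (hsub : Integrable fun v : ι → ℝ => Φ fun k => (v k : ℂ) - I * a k) (x : ι → ℝ) :
    (2 * Real.cosh (∑ k, x k * a k)) •
        ∫ v : ι → ℝ, cexp (-I * (∑ k, x k * v k : ℝ)) • Φ (fun k => (v k : ℂ)) =
      ∫ v : ι → ℝ, cexp (-I * (∑ k, x k * v k : ℝ)) •
        (Φ (fun k => (v k : ℂ) + I * a k) + Φ (fun k => (v k : ℂ) - I * a k)) := by
  have hzero : (0 : ι → ℝ) ∈ segment ℝ (-a) a := by
    simpa using midpoint_mem_segment (𝕜 := ℝ) (-a) a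
  have hhalf {w : ι → ℝ} (hw : w ∈ segment ℝ (-a) a) : segment ℝ 0 w ⊆ segment ℝ (-a) a :=
    (convex_segment (-a) a).segment_subset hzero hw
  have hshift {w : ι → ℝ} (hw : w ∈ segment ℝ (-a) a) :=
    integral_cexp_smul_add_I_mul (hd.mono (tubeDomain_mono (hhalf hw)))
      (hdecay.mono_left (tubeAtInfty_mono (hhalf hw))) h0
  have hup := hshift (right_mem_segment ℝ (-a) a) hadd x
  have hdown := hshift (left_mem_segment ℝ (-a) a) (by simpa [← sub_eq_add_neg] using hsub) x
  simp only [Pi.neg_apply, ofReal_neg, mul_neg, ← sub_eq_add_neg, Finset.sum_neg_distrib,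
    neg_neg] at hdown
  simp only [smul_add]
  rw [integral_add (integrable_cexp_neg_I_mul_sum_smul hadd x)
    (integrable_cexp_neg_I_mul_sum_smul hsub x), hup, hdown, ← add_smul, Real.cosh_eq]
  congr 1
  ring

theorem density_cosh_majorant_general {Φ : (ι → ℂ) → E} {a : ι → ℝ}
    (hd : DifferentiableOn ℂ Φ (tubeDomain (segment ℝ (-a) a)))
    (hdecay : Tendsto Φ (tubeAtInfty (segment ℝ (-a) a)) (𝓝 0))
    (h0 : Integrable fun v : ι → ℝ => Φ fun k => (v k : ℂ))
    (hadd : Integrable fun v : ι → ℝ => Φ fun k => (v k : ℂ) + I * a k)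
    (hsub : Integrable fun v : ι → ℝ => Φ fun k => (v k : ℂ) - I * a k) (x : ι → ℝ) :
    ‖((2 * Real.pi) ^ Fintype.card ι)⁻¹ •
        ∫ v : ι → ℝ, cexp (-I * (∑ k, x k * v k : ℝ)) • Φ (fun k => (v k : ℂ))‖ ≤
      (1 / (2 * (2 * Real.pi) ^ Fintype.card ι) *
        ∫ v : ι → ℝ, ‖Φ (fun k => (v k : ℂ) + I * a k) + Φ (fun k => (v k : ℂ) - I * a k)‖) /
          Real.cosh (∑ k, x k * a k) := by
  set C := ∫ v : ι → ℝ, cexp (-I * (∑ k, x k * v k : ℝ)) • Φ (fun k => (v k : ℂ)) with hC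
  have hcosh := Real.cosh_pos (∑ k, x k * a k)
  have hbound : 2 * Real.cosh (∑ k, x k * a k) * ‖C‖ ≤
      ∫ v : ι → ℝ, ‖Φ (fun k => (v k : ℂ) + I * a k) + Φ (fun k => (v k : ℂ) - I * a k)‖ :=
    calc 2 * Real.cosh (∑ k, x k * a k) * ‖C‖
        = ‖(2 * Real.cosh (∑ k, x k * a k)) • C‖ := by
          rw [norm_smul, Real.norm_of_nonneg (by positivity)]
      _ ≤ ∫ v : ι → ℝ, ‖cexp (-I * (∑ k, x k * v k : ℝ)) •
            (Φ (fun k => (v k : ℂ) + I * a k) + Φ (fun k => (v k : ℂ) - I * a k))‖ := by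
          rw [hC, two_mul_cosh_smul_integral_cexp_smul hd hdecay h0 hadd hsub x]
          exact norm_integral_le_integral_norm _
      _ = ∫ v : ι → ℝ,
            ‖Φ (fun k => (v k : ℂ) + I * a k) + Φ (fun k => (v k : ℂ) - I * a k)‖ := by
          simp_rw [norm_smul, neg_mul, mul_comm I, ← neg_mul, ← ofReal_neg, norm_exp_ofReal_mul_I,
            one_mul]
  rw [norm_smul, Real.norm_of_nonneg (by positivity), le_div_iff₀ hcosh]
  calc ((2 * Real.pi) ^ Fintype.card ι)⁻¹ * ‖C‖ * Real.cosh (∑ k, x k * a k)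
      = 1 / (2 * (2 * Real.pi) ^ Fintype.card ι) *
          (2 * Real.cosh (∑ k, x k * a k) * ‖C‖) := by field_simp
    _ ≤ _ := by gcongr

end FourierIntegral

theorem density_cosh_majorant
    (n : ℕ) (hn : 1 ≤ n) (a : ℝ) (ha : 0 < a)
    (Φ : (Fin n → ℂ) → ℂ) (T : Set (Fin n → ℂ))
    (hT : T = {z : Fin n → ℂ | ∀ k, -a ≤ (z k).im ∧ (z k).im ≤ a})
    (hol : ∃ U : Set (Fin n → ℂ), IsOpen U ∧ T ⊆ U ∧ DifferentiableOn ℂ Φ U)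
    (hint : ∀ w : Fin n → ℝ, (∀ k, w k ∈ Set.Icc (-a) a) →
      Integrable (fun v : Fin n → ℝ => Φ (fun k => (v k : ℂ) + Complex.I * (w k : ℂ))))
    (hdecay : ∀ ε > (0 : ℝ), ∃ R : ℝ, ∀ z ∈ T,
      R ≤ Real.sqrt (∑ k, (z k).re ^ 2) → ‖Φ z‖ < ε)
    (p : (Fin n → ℝ) → ℂ)
    (hp : ∀ x : Fin n → ℝ, p x =
      (((2 * Real.pi) ^ n)⁻¹ : ℝ) *
        ∫ v : Fin n → ℝ,
          Complex.exp (-Complex.I * (∑ k, x k * v k : ℝ)) * Φ (fun k => (v k : ℂ)))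
    (M : ℝ)
    (hM : M = (1 / (2 * (2 * Real.pi) ^ n)) *
      ∫ v : Fin n → ℝ,
        ‖Φ (fun k => (v k : ℂ) + Complex.I * (a : ℂ))
          + Φ (fun k => (v k : ℂ) - Complex.I * (a : ℂ))‖) :
    ∀ x : Fin n → ℝ, ‖p x‖ ≤ M / Real.cosh (∑ k, x k * a) := by
  intro x
  subst hT
  obtain ⟨U, -, hTU, hd⟩ := hol
  have hbase : tubeDomain (segment ℝ (-fun _ => a) fun _ : Fin n => a) ⊆
      {z | ∀ k, -a ≤ (z k).im ∧ (z k).im ≤ a} := fun z hz k =>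
    have hIcc := segment_subset_Icc (Pi.le_def.2 fun _ => neg_le_self ha.le) hz
    ⟨hIcc.1 k, hIcc.2 k⟩
  rw [hp, hM]
  simpa using density_cosh_majorant_general (hd.mono (hbase.trans hTU))
    (tendsto_tubeAtInfty_of_forall_sqrt_le fun ε hε =>
      (hdecay ε hε).imp fun R hR z hz => hR z (hbase hz))
    (by simpa using hint 0 (by simp [ha.le]))
    (hint (fun _ => a) (by simp [ha.le]))
    (by simpa [← sub_eq_add_neg] using hint (fun _ => -a) (by simp [ha.le])) x
end

section
/- Let n ≥ 1 and let p : ℝⁿ → ℝ be a continuous probability density (p ≥ 0 and ∫_{ℝⁿ} p = 1) with characteristic function Φ(v) = ∫_{ℝⁿ} e^{i⟨v,x⟩} p(x) dx. Suppose there exist A > 0 and δ > 0 such that p(x) ≤ A(1 + ‖x‖)^{−n−δ} and |Φ(v)| ≤ A(1 + ‖v‖)^{−n−δ} for all x, v ∈ ℝⁿ. Let P > 0 and ε > 0 be such that Σ_{m ∈ ℤⁿ, m ≠ 0} p(x + Pm) ≤ ε for all x ∈ [−P/2, P/2]ⁿ. Then for every q ∈ [1, ∞), ( ∫_{[−P/2,P/2]ⁿ}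 | p(x) − P^{−n} Σ_{m ∈ ℤⁿ} Φ(−2πm/P) e^{2πi⟨m,x⟩/P} |^q dx )^{1/q} ≤ ε P^{n/q}, and moreover sup_{x ∈ [−P/2,P/2]ⁿ} | p(x) − P^{−n} Σ_{m ∈ ℤⁿ} Φ(−2πm/P) e^{2πi⟨m,x⟩/P} | ≤ ε. -/
open MeasureTheory Complex

/-!
The bound is Poisson summation in disguise. The `Pℤⁿ`-periodization `∑ₘ p (x + P m)` of `p` is a
continuous function on the torus whose Fourier coefficients are the samples `P⁻ⁿ Φ(-2πm/P)`; these
are summable, so the Fourier series converges to the periodization at every point. Hence the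
approximation error at a point `x` of the cube is exactly the aliasing term `∑_{m ≠ 0} p (x + P m)`,
and the `L^q` bound follows since the cube has volume `Pⁿ`.
-/

section Decay

open Asymptotics Filter Module

lemma rpow_neg_le_mul_rpow_neg {a b c s : ℝ} (hs : 0 ≤ s) (hb : 0 < b) (hc : 0 < c)
    (h : b ≤ c * a) : a ^ (-s) ≤ c ^ s * b ^ (-s) := by
  calc a ^ (-s) ≤ (b / c) ^ (-s) :=
        Real.rpow_le_rpow_of_nonpos (by positivity) ((div_le_iff₀' hc).2 h) (neg_nonpos.2 hs)
    _ = c ^ s * b ^ (-s) := by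
        rw [Real.div_rpow hb.le hc.le, Real.rpow_neg hc.le, div_inv_eq_mul, mul_comm]

lemma isBigO_one_add_rpow_neg {α : Type*} {l : Filter α} {u v : α → ℝ} {c s : ℝ} (hs : 0 ≤ s)
    (hc : 0 < c) (hv : ∀ a, 0 ≤ v a) (huv : ∀ a, c * v a ≤ u a) :
    (fun a ↦ (1 + u a) ^ (-s)) =O[l] fun a ↦ (1 + v a) ^ (-s) := by
  refine .of_bound (max 1 c⁻¹ ^ s) (.of_forall fun a ↦ ?_)
  have hu : 0 ≤ u a := (mul_nonneg hc.le (hv a)).trans (huv a)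
  have hva : 0 < 1 + v a := by linarith [hv a]
  rw [Real.norm_of_nonneg (by positivity), Real.norm_of_nonneg (by positivity)]
  refine rpow_neg_le_mul_rpow_neg hs hva (by positivity) ?_
  calc 1 + v a ≤ 1 + c⁻¹ * u a := by gcongr; exact (le_inv_mul_iff₀ hc).2 (huv a)
    _ ≤ max 1 c⁻¹ * 1 + max 1 c⁻¹ * u a := by
        gcongr
        · simp
        · exact le_max_right 1 c⁻¹
    _ = max 1 c⁻¹ * (1 + u a) := by ring

lemma one_add_norm_add_rpow_neg_le {E : Type*} [SeminormedAddCommGroup E] {s R : ℝ} (hs : 0 ≤ s)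
    {x : E} (hx : ‖x‖ ≤ R) (y : E) :
    (1 + ‖x + y‖) ^ (-s) ≤ (1 + R) ^ s * (1 + ‖y‖) ^ (-s) := by
  have hR : 0 ≤ R := (norm_nonneg x).trans hx
  have hy : ‖y‖ ≤ ‖x + y‖ + ‖x‖ := by simpa using norm_sub_le (x + y) x
  refine rpow_neg_le_mul_rpow_neg hs (by positivity) (by positivity) ?_
  nlinarith [norm_nonneg (x + y)]

lemma isBigO_comp_smul_of_isBigO_one_add_norm {V E : Type*} [NormedAddCommGroup V]
    [NormedSpace ℝ V] [Norm E] {f : V → E} {s : ℝ} (hs : 0 ≤ s)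
    (hf : f =O[⊤] fun x ↦ (1 + ‖x‖) ^ (-s)) {c : ℝ} (hc : c ≠ 0) :
    (fun x ↦ f (c • x)) =O[⊤] fun x ↦ (1 + ‖x‖) ^ (-s) :=
  (hf.comp_tendsto tendsto_top).trans <| isBigO_one_add_rpow_neg hs (norm_pos_iff.2 hc)
    (fun _ ↦ norm_nonneg _) fun x ↦ (norm_smul c x).ge

lemma integrable_of_isBigO_one_add_norm {V E : Type*} [NormedAddCommGroup V] [NormedSpace ℝ V]
    [FiniteDimensional ℝ V] [MeasurableSpace V] [BorelSpace V] [NormedAddCommGroup E]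
    {μ : Measure V} [μ.IsAddHaarMeasure] {f : V → E} (hf : AEStronglyMeasurable f μ) {s : ℝ}
    (hs : finrank ℝ V < s) (hfs : f =O[⊤] fun x ↦ (1 + ‖x‖) ^ (-s)) : Integrable f μ := by
  obtain ⟨C, hC⟩ := isBigO_top.1 hfs
  exact ((integrable_one_add_norm hs).norm.const_mul C).mono' hf (.of_forall hC)

variable {ι : Type*} [Fintype ι]

lemma pi_norm_le_sqrt_sum_sq (x : ι → ℝ) : ‖x‖ ≤ √(∑ i, x i ^ 2) :=
  (pi_norm_le_iff_of_nonneg (Real.sqrt_nonneg _)).2 fun i ↦ Real.abs_le_sqrt <|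
    Finset.single_le_sum (f := fun i ↦ x i ^ 2) (fun _ _ ↦ sq_nonneg _) (Finset.mem_univ i)

lemma isBigO_one_add_norm_of_le_one_add_sqrt_sum_sq {E : Type*} [Norm E] {f : (ι → ℝ) → E}
    {A s : ℝ} (hs : 0 ≤ s) (hf : ∀ x, ‖f x‖ ≤ A * (1 + √(∑ i, x i ^ 2)) ^ (-s)) :
    f =O[⊤] fun x ↦ (1 + ‖x‖) ^ (-s) := by
  have hsqrt : f =O[⊤] fun x : ι → ℝ ↦ (1 + √(∑ i, x i ^ 2)) ^ (-s) :=
    isBigO_top.2 ⟨A, fun x ↦ (hf x).trans_eq (by rw [Real.norm_of_nonneg (by positivity)])⟩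
  exact hsqrt.trans <| isBigO_one_add_rpow_neg hs one_pos (fun _ ↦ norm_nonneg _) fun x ↦
    (one_mul ‖x‖).trans_le (pi_norm_le_sqrt_sum_sq x)

lemma summable_one_add_norm_intCast_rpow {s : ℝ} (hs : Fintype.card ι < s) :
    Summable fun m : ι → ℤ ↦ (1 + ‖(Int.cast ∘ m : ι → ℝ)‖) ^ (-s) := by
  let L := Submodule.span ℤ (Set.range (Pi.basisFun ℝ ι))
  have intCast_mem (m : ι → ℤ) : (Int.cast ∘ m : ι → ℝ) ∈ L :=
    ((Pi.basisFun ℝ ι).mem_span_iff_repr_mem ℤ _).2 fun i ↦ ⟨m i, by simp⟩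
  have hinj : Function.Injective fun m : ι → ℤ ↦ (⟨_, intCast_mem m⟩ : L) := fun m m' h ↦
    Int.cast_injective.comp_left (congrArg Subtype.val h)
  have hL : -s < -finrank ℤ L := by
    rw [ZLattice.rank ℝ L, finrank_fintype_fun_eq_card]
    exact neg_lt_neg hs
  refine .of_norm_bounded_eventually
    ((ZLattice.summable_norm_rpow L (-s) hL).comp_injective hinj) ?_
  filter_upwards [(Set.finite_singleton (0 : ι → ℤ)).compl_mem_cofinite] with m hm
  have hpos : 0 < ‖(Int.cast ∘ m : ι → ℝ)‖ :=
    norm_pos_iff.2 fun h ↦ hm (Int.cast_injective.comp_left (h.trans (by ext; simp)))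
  rw [Real.norm_of_nonneg (by positivity)]
  exact Real.rpow_le_rpow_of_nonpos hpos (le_add_of_nonneg_left zero_le_one)
    (by linarith [(Fintype.card ι).cast_nonneg (α := ℝ)])

variable {E : Type*} [NormedAddCommGroup E] {f : (ι → ℝ) → E} {s : ℝ}

lemma exists_summable_norm_comp_add_intCast_le (hs : Fintype.card ι < s)
    (hfs : f =O[⊤] fun x ↦ (1 + ‖x‖) ^ (-s)) (R : ℝ) :
    ∃ u : (ι → ℤ) → ℝ, Summable u ∧ ∀ m x, ‖x‖ ≤ R → ‖f (x + Int.cast ∘ m)‖ ≤ u m := by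
  obtain ⟨C, hC, hfC⟩ := hfs.exists_nonneg
  have hs0 : 0 ≤ s := (Nat.cast_nonneg _).trans hs.le
  refine ⟨_, ((summable_one_add_norm_intCast_rpow hs).mul_left ((1 + R) ^ s)).mul_left C,
    fun m x hx ↦ (isBigOWith_top.1 hfC _).trans ?_⟩
  rw [Real.norm_of_nonneg (by positivity)]
  gcongr
  exact one_add_norm_add_rpow_neg_le hs0 hx _

lemma summable_norm_comp_add_smul_intCast (hs : Fintype.card ι < s)
    (hfs : f =O[⊤] fun x ↦ (1 + ‖x‖) ^ (-s)) {c : ℝ} (hc : c ≠ 0) (x : ι → ℝ) :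
    Summable fun m : ι → ℤ ↦ ‖f (x + c • (Int.cast ∘ m))‖ := by
  have hs0 : 0 ≤ s := (Nat.cast_nonneg _).trans hs.le
  obtain ⟨u, hu, hfu⟩ := exists_summable_norm_comp_add_intCast_le hs
    (isBigO_comp_smul_of_isBigO_one_add_norm hs0 hfs hc) ‖c⁻¹ • x‖
  refine hu.of_nonneg_of_le (fun _ ↦ norm_nonneg _) fun m ↦ ?_
  simpa [smul_add, smul_inv_smul₀ hc] using hfu m (c⁻¹ • x) le_rfl

end Decay

section Periodization

variable {ι E : Type*}

/-- The `ℤ^ι`-periodization of `f`, whose Fourier series is the subject of the Poisson summation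
formula. It is a `tsum`, hence `0` at the points where the translates of `f` are not summable. -/
noncomputable def periodization [AddCommMonoid E] [TopologicalSpace E] (f : (ι → ℝ) → E)
    (x : ι → ℝ) : E :=
  ∑' m : ι → ℤ, f (x + Int.cast ∘ m)

/-- The covering map from `ℝ^ι` to the torus `(ℝ/ℤ)^ι`. -/
def toUnitAddTorus (x : ι → ℝ) : UnitAddTorus ι := fun i ↦ x i

lemma toUnitAddTorus_add_intCast (x : ι → ℝ) (m : ι → ℤ) :
    toUnitAddTorus (x + Int.cast ∘ m) = toUnitAddTorus x := by
  ext i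
  simp [toUnitAddTorus]

lemma exists_eq_add_intCast_of_toUnitAddTorus_eq {x y : ι → ℝ}
    (h : toUnitAddTorus x = toUnitAddTorus y) : ∃ m : ι → ℤ, y = x + Int.cast ∘ m := by
  have (i : ι) : ∃ k : ℤ, k • (1 : ℝ) = y i - x i := by
    rw [← AddCircle.coe_eq_zero_iff, AddCircle.coe_sub, sub_eq_zero]
    exact congrFun h.symm i
  choose m hm using this
  exact ⟨m, funext fun i ↦ by simp [← zsmul_one, hm]⟩

lemma isOpenQuotientMap_toUnitAddTorus :
    IsOpenQuotientMap (toUnitAddTorus : (ι → ℝ) → UnitAddTorus ι) :=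
  .piMap fun _ ↦ QuotientAddGroup.isOpenQuotientMap_mk

lemma periodization_add_intCast [AddCommMonoid E] [TopologicalSpace E] (f : (ι → ℝ) → E)
    (x : ι → ℝ) (k : ι → ℤ) : periodization f (x + Int.cast ∘ k) = periodization f x := by
  rw [periodization, periodization, ← (Equiv.addLeft k).tsum_eq fun m ↦ f (x + Int.cast ∘ m)]
  refine tsum_congr fun m ↦ congrArg f ?_
  ext i
  simp [add_assoc]

lemma exists_continuousMap_toUnitAddTorus_eq_periodization [AddCommMonoid E] [TopologicalSpace E]
    {f : (ι → ℝ) → E} (hf : Continuous (periodization f)) :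
    ∃ F : C(UnitAddTorus ι, E), ∀ x, F (toUnitAddTorus x) = periodization f x := by
  have hfactor : Function.FactorsThrough (⟨_, hf⟩ : C(ι → ℝ, E))
      (⟨_, isOpenQuotientMap_toUnitAddTorus.continuous⟩ : C(ι → ℝ, UnitAddTorus ι)) := by
    intro x y hxy
    obtain ⟨m, rfl⟩ := exists_eq_add_intCast_of_toUnitAddTorus_eq hxy
    exact (periodization_add_intCast f x m).symm
  have hq : Topology.IsQuotientMap
      (⟨_, isOpenQuotientMap_toUnitAddTorus.continuous⟩ : C(ι → ℝ, UnitAddTorus ι)) :=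
    isOpenQuotientMap_toUnitAddTorus.isQuotientMap
  exact ⟨hq.lift _ hfactor, DFunLike.congr_fun (hq.lift_comp _ hfactor)⟩

/-- The half-open unit cube with lower corner `a`: a fundamental domain of `ℤ^ι`, half-open in the
same way as the cubes over which Mathlib computes integrals on `UnitAddTorus ι`. -/
def unitCell (a : ι → ℝ) : Set (ι → ℝ) := {x | ∀ i, x i ∈ Set.Ioc (a i) (a i + 1)}

lemma unitCell_eq_pi (a : ι → ℝ) :
    unitCell a = Set.univ.pi fun i ↦ Set.Ioc (a i) (a i + 1) := by
  ext; simp [unitCell]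

lemma measurableSet_unitCell [Countable ι] (a : ι → ℝ) : MeasurableSet (unitCell a) := by
  rw [unitCell_eq_pi]
  exact .univ_pi fun _ ↦ measurableSet_Ioc

lemma pairwise_disjoint_unitCell_intCast :
    Pairwise (Function.onFun Disjoint fun m : ι → ℤ ↦ unitCell (Int.cast ∘ m)) := by
  intro m m' hm
  obtain ⟨i, hi⟩ := Function.ne_iff.1 hm
  simp only [Function.onFun, unitCell_eq_pi, Set.disjoint_univ_pi]
  exact ⟨i, Set.pairwise_disjoint_Ioc_intCast ℝ hi⟩

lemma iUnion_unitCell_intCast : ⋃ m : ι → ℤ, unitCell (Int.cast ∘ m) = Set.univ := by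
  simp only [unitCell_eq_pi, Function.comp_apply]
  rw [Set.iUnion_univ_pi fun (_ : ι) (k : ℤ) ↦ Set.Ioc (k : ℝ) (k + 1), iUnion_Ioc_intCast,
    Set.pi_univ]

variable [Fintype ι] [NormedAddCommGroup E]

lemma continuous_periodization {f : (ι → ℝ) → E} [CompleteSpace E] (hf : Continuous f) {s : ℝ}
    (hs : Fintype.card ι < s) (hfs : f =O[⊤] fun x ↦ (1 + ‖x‖) ^ (-s)) :
    Continuous (periodization f) := by
  refine continuous_iff_continuousAt.2 fun x ↦ ?_
  obtain ⟨u, hu, hfu⟩ := exists_summable_norm_comp_add_intCast_le hs hfs (‖x‖ + 1)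
  have hball : ContinuousOn (periodization f) (Metric.closedBall 0 (‖x‖ + 1)) :=
    continuousOn_tsum (fun m ↦ by fun_prop) hu fun m y hy ↦ hfu m y (by simpa using hy)
  exact hball.continuousAt (Metric.closedBall_mem_nhds_of_mem (by simp))

variable [NormedSpace ℝ E]

lemma setIntegral_unitCell_add (f : (ι → ℝ) → E) (a v : ι → ℝ) :
    ∫ x in unitCell a, f (x + v) = ∫ x in unitCell (a + v), f x := by
  have hpre : (· + v) ⁻¹' unitCell (a + v) = unitCell a := by
    ext x
    exact forall_congr' fun i ↦ by simp [add_right_comm (a i) (v i) 1]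
  rw [← hpre]
  exact (measurePreserving_add_right volume v).setIntegral_preimage_emb
    (measurableEmbedding_addRight v) f _

lemma hasSum_setIntegral_unitCell_comp_add_intCast {f : (ι → ℝ) → E} (hf : Integrable f) :
    HasSum (fun m : ι → ℤ ↦ ∫ x in unitCell 0, f (x + Int.cast ∘ m)) (∫ x, f x) := by
  simpa only [setIntegral_unitCell_add, zero_add, iUnion_unitCell_intCast, setIntegral_univ] using
    hasSum_integral_iUnion (fun m : ι → ℤ ↦ measurableSet_unitCell (Int.cast ∘ m))
      pairwise_disjoint_unitCell_intCast hf.integrableOn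

lemma setIntegral_periodization {f : (ι → ℝ) → E} (hf : Integrable f) :
    ∫ x in unitCell 0, periodization f x = ∫ x, f x :=
  (hasSum_integral_of_summable_integral_norm
    (fun m : ι → ℤ ↦ (hf.comp_add_right (Int.cast ∘ m)).integrableOn)
    (hasSum_setIntegral_unitCell_comp_add_intCast hf.norm).summable).unique
    (hasSum_setIntegral_unitCell_comp_add_intCast hf)

end Periodization

lemma norm_sub_tsum_le_tsum_norm_ne {β E : Type*} [NormedAddCommGroup E] [CompleteSpace E]
    {u : β → E} (hu : Summable fun b ↦ ‖u b‖) (a : β) :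
    ‖u a - ∑' b, u b‖ ≤ ∑' b : {b // b ≠ a}, ‖u b‖ := by
  have hsplit : u a + ∑' b : {b // b ≠ a}, u b = ∑' b, u b := by
    simpa using! hu.of_norm.tsum_subtype_add_tsum_subtype_compl {a}
  rw [← hsplit, sub_add_cancel_left, norm_neg]
  exact norm_tsum_le_tsum_norm (hu.subtype _)

section PoissonSummation

open UnitAddTorus Asymptotics

variable {ι : Type*} [Fintype ι] {f : (ι → ℝ) → ℂ}

/-- The characteristic function `v ↦ ∫ e^{i⟨v,x⟩} f(x) dx` of a complex density `f`, that is, the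
Fourier transform of `f` with the sign and scaling used in probability. -/
noncomputable def densityCharFun (f : (ι → ℝ) → ℂ) (v : ι → ℝ) : ℂ :=
  ∫ x, cexp (I * (∑ i, v i * x i : ℝ)) * f x

lemma densityCharFun_comp_smul (f : (ι → ℝ) → ℂ) (c : ℝ) (v : ι → ℝ) :
    densityCharFun (fun x ↦ f (c • x)) (c • v) =
      |(c ^ Fintype.card ι)⁻¹| • densityCharFun f v := by
  have h := Measure.integral_comp_smul (volume : Measure (ι → ℝ))
    (fun x ↦ cexp (I * (∑ i, v i * x i : ℝ)) * f x) c
  rw [Module.finrank_fintype_fun_eq_card] at h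
  simpa only [densityCharFun, Pi.smul_apply, smul_eq_mul, mul_assoc, mul_left_comm c] using h

lemma mFourier_toUnitAddTorus (m : ι → ℤ) (x : ι → ℝ) :
    mFourier m (toUnitAddTorus x) = cexp (2 * Real.pi * I * (∑ i, m i * x i : ℝ)) := by
  simp only [mFourier, ContinuousMap.coe_mk, toUnitAddTorus, fourier_coe_apply, ← Complex.exp_sum]
  congr 1
  push_cast
  simp only [Finset.mul_sum, div_one, mul_assoc]

lemma mFourierCoeff_eq_densityCharFun {F : UnitAddTorus ι → ℂ} (hf : Integrable f)
    (hF : ∀ x, F (toUnitAddTorus x) = periodization f x) (m : ι → ℤ) :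
    mFourierCoeff F m = densityCharFun f fun i ↦ -2 * Real.pi * m i := by
  let g : (ι → ℝ) → ℂ := fun x ↦ mFourier (-m) (toUnitAddTorus x) * f x
  have hmeas : AEStronglyMeasurable (fun x ↦ mFourier (-m) (toUnitAddTorus x)) volume :=
    ((mFourier (-m)).continuous.comp
      isOpenQuotientMap_toUnitAddTorus.continuous).aestronglyMeasurable
  have hg : Integrable g :=
    hf.bdd_mul hmeas (.of_forall fun x ↦ (mFourier (-m)).norm_coe_le_norm _)
  calc mFourierCoeff F m
      = ∫ x in unitCell 0, mFourier (-m) (toUnitAddTorus x) * F (toUnitAddTorus x) :=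
        mFourierCoeff_eq_integral F m 0
    _ = ∫ x in unitCell 0, periodization g x := by
        simp only [hF, periodization, g, toUnitAddTorus_add_intCast, tsum_mul_left]
    _ = ∫ x, g x := setIntegral_periodization hg
    _ = densityCharFun f fun i ↦ -2 * Real.pi * m i := by
        refine integral_congr_ae (.of_forall fun x ↦ ?_)
        simp only [g, mFourier_toUnitAddTorus]
        congr 2
        push_cast
        simp only [Finset.mul_sum, Pi.neg_apply]
        refine Finset.sum_congr rfl fun i _ ↦ ?_
        push_cast
        ring

theorem hasSum_densityCharFun_periodization (hf : Integrable f)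
    (hper : Continuous (periodization f))
    (hΦ : Summable fun m : ι → ℤ ↦ densityCharFun f fun i ↦ -2 * Real.pi * m i) (x : ι → ℝ) :
    HasSum (fun m : ι → ℤ ↦ densityCharFun f (fun i ↦ -2 * Real.pi * m i) *
      cexp (2 * Real.pi * I * (∑ i, m i * x i : ℝ))) (periodization f x) := by
  obtain ⟨F, hF⟩ := exists_continuousMap_toUnitAddTorus_eq_periodization hper
  have hcoeff : mFourierCoeff F = fun m ↦ densityCharFun f fun i ↦ -2 * Real.pi * m i :=
    funext (mFourierCoeff_eq_densityCharFun hf hF)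
  simpa only [hcoeff, hF, mFourier_toUnitAddTorus, smul_eq_mul] using
    hasSum_mFourier_series_apply_of_summable (f := F) (hcoeff ▸ hΦ) (toUnitAddTorus x)

theorem tsum_comp_add_mul_intCast_eq_tsum_densityCharFun {P : ℝ} (hP : 0 < P) (hf : Continuous f)
    {s : ℝ} (hs : Fintype.card ι < s) (hfs : f =O[⊤] fun x ↦ (1 + ‖x‖) ^ (-s))
    (hΦ : Summable fun m : ι → ℤ ↦ densityCharFun f fun i ↦ -2 * Real.pi * m i / P) (x : ι → ℝ) :
    ∑' m : ι → ℤ, f (fun i ↦ x i + P * m i) = ((P ^ Fintype.card ι)⁻¹ : ℝ) *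
      ∑' m : ι → ℤ, densityCharFun f (fun i ↦ -2 * Real.pi * m i / P) *
        cexp (2 * Real.pi * I * ((∑ i, m i * x i) / P : ℝ)) := by
  let g : (ι → ℝ) → ℂ := fun y ↦ f (P • y)
  have hg : Continuous g := by fun_prop
  have hs0 : 0 ≤ s := (Nat.cast_nonneg _).trans hs.le
  have hgs : g =O[⊤] fun y ↦ (1 + ‖y‖) ^ (-s) :=
    isBigO_comp_smul_of_isBigO_one_add_norm hs0 hfs hP.ne'
  have hgint : Integrable g :=
    integrable_of_isBigO_one_add_norm hg.aestronglyMeasurable (by simpa using hs) hgs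
  have hgΦ (m : ι → ℤ) : densityCharFun g (fun i ↦ -2 * Real.pi * m i) =
      ((P ^ Fintype.card ι)⁻¹ : ℝ) * densityCharFun f fun i ↦ -2 * Real.pi * m i / P := by
    have hscale : (fun i ↦ -2 * Real.pi * m i) = P • fun i ↦ -2 * Real.pi * m i / P := by
      ext i
      simp [mul_div_cancel₀ _ hP.ne']
    rw [hscale, densityCharFun_comp_smul, abs_of_pos (by positivity), Complex.real_smul]
  have hpoisson := hasSum_densityCharFun_periodization hgint (continuous_periodization hg hs hgs)
    (by simpa only [hgΦ] using hΦ.mul_left _) (P⁻¹ • x)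
  have hper : periodization g (P⁻¹ • x) = ∑' m : ι → ℤ, f (fun i ↦ x i + P * m i) :=
    tsum_congr fun m ↦ congrArg f <| funext fun i ↦ by simp [mul_add, hP.ne']
  have hphase (m : ι → ℤ) : ∑ i, m i * (P⁻¹ • x) i = (∑ i, m i * x i) / P := by
    simp only [Finset.sum_div, Pi.smul_apply, smul_eq_mul, inv_mul_eq_div, mul_div_assoc]
  rw [← hper, ← hpoisson.tsum_eq, ← tsum_mul_left]
  exact tsum_congr fun m ↦ by rw [hgΦ, hphase, mul_assoc]

theorem norm_sub_tsum_densityCharFun_le_tsum_norm {P : ℝ} (hP : 0 < P) (hf : Continuous f)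
    {s : ℝ} (hs : Fintype.card ι < s) (hfs : f =O[⊤] fun x ↦ (1 + ‖x‖) ^ (-s))
    (hΦ : Summable fun m : ι → ℤ ↦ densityCharFun f fun i ↦ -2 * Real.pi * m i / P) (x : ι → ℝ) :
    ‖f x - ((P ^ Fintype.card ι)⁻¹ : ℝ) *
      ∑' m : ι → ℤ, densityCharFun f (fun i ↦ -2 * Real.pi * m i / P) *
        cexp (2 * Real.pi * I * ((∑ i, m i * x i) / P : ℝ))‖ ≤
      ∑' m : {m : ι → ℤ // m ≠ 0}, ‖f fun i ↦ x i + P * (m : ι → ℤ) i‖ := by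
  have hsummable : Summable fun m : ι → ℤ ↦ ‖f fun i ↦ x i + P * m i‖ :=
    summable_norm_comp_add_smul_intCast hs hfs hP.ne' x
  rw [← tsum_comp_add_mul_intCast_eq_tsum_densityCharFun hP hf hs hfs hΦ]
  simpa using norm_sub_tsum_le_tsum_norm_ne hsummable 0

end PoissonSummation

lemma rpow_setIntegral_norm_rpow_le {α E : Type*} [MeasurableSpace α] {μ : Measure α}
    [NormedAddCommGroup E] {g : α → E} {t : Set α} {C q : ℝ} (hq : 0 < q) (hC : 0 ≤ C)
    (ht : μ t < ⊤) (hg : ∀ x ∈ t, ‖g x‖ ≤ C) :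
    (∫ x in t, ‖g x‖ ^ q ∂μ) ^ (1 / q) ≤ C * μ.real t ^ (1 / q) := by
  have hgq : ∀ x ∈ t, ‖‖g x‖ ^ q‖ ≤ C ^ q := fun x hx ↦ by
    rw [Real.norm_of_nonneg (by positivity)]
    exact Real.rpow_le_rpow (norm_nonneg _) (hg x hx) hq.le
  have hint : ∫ x in t, ‖g x‖ ^ q ∂μ ≤ C ^ q * μ.real t :=
    (le_abs_self _).trans (norm_setIntegral_le_of_norm_le_const ht hgq)
  calc (∫ x in t, ‖g x‖ ^ q ∂μ) ^ (1 / q) ≤ (C ^ q * μ.real t) ^ (1 / q) :=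
        Real.rpow_le_rpow (integral_nonneg fun x ↦ by positivity) hint (by positivity)
    _ = C * μ.real t ^ (1 / q) := by
        rw [Real.mul_rpow (by positivity) (by positivity), ← Real.rpow_mul hC,
          mul_one_div_cancel hq.ne', Real.rpow_one]

lemma setOf_forall_abs_le_eq_closedBall {ι : Type*} [Fintype ι] {r : ℝ} (hr : 0 ≤ r) :
    {x : ι → ℝ | ∀ i, |x i| ≤ r} = Metric.closedBall 0 r := by
  ext x
  simp [pi_norm_le_iff_of_nonneg hr]

lemma rpow_setIntegral_cube_norm_rpow_le {ι E : Type*} [Fintype ι] [NormedAddCommGroup E]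
    {g : (ι → ℝ) → E} {P C q : ℝ} (hP : 0 ≤ P) (hq : 0 < q)
    (hg : ∀ x : ι → ℝ, (∀ i, |x i| ≤ P / 2) → ‖g x‖ ≤ C) :
    (∫ x in {x : ι → ℝ | ∀ i, |x i| ≤ P / 2}, ‖g x‖ ^ q) ^ (1 / q) ≤
      C * P ^ ((Fintype.card ι : ℝ) / q) := by
  have hC : 0 ≤ C := (norm_nonneg _).trans (hg 0 fun i ↦ by simpa using div_nonneg hP zero_le_two)
  have hvol : volume {x : ι → ℝ | ∀ i, |x i| ≤ P / 2} = ENNReal.ofReal (P ^ Fintype.card ι) := by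
    rw [setOf_forall_abs_le_eq_closedBall (by positivity),
      Real.volume_pi_closedBall 0 (by positivity), mul_div_cancel₀ P two_ne_zero]
  calc (∫ x in {x : ι → ℝ | ∀ i, |x i| ≤ P / 2}, ‖g x‖ ^ q) ^ (1 / q)
      ≤ C * volume.real {x : ι → ℝ | ∀ i, |x i| ≤ P / 2} ^ (1 / q) :=
        rpow_setIntegral_norm_rpow_le hq hC (hvol ▸ ENNReal.ofReal_lt_top) hg
    _ = C * P ^ ((Fintype.card ι : ℝ) / q) := by
        rw [measureReal_def, hvol, ENNReal.toReal_ofReal (by positivity), ← Real.rpow_natCast,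
          ← Real.rpow_mul hP, mul_one_div]

theorem density_fourier_approximation_general {ι : Type*} [Fintype ι] {f : (ι → ℝ) → ℂ}
    (hf : Continuous f) {A s : ℝ} (hs : Fintype.card ι < s)
    (hfA : ∀ x, ‖f x‖ ≤ A * (1 + √(∑ i, x i ^ 2)) ^ (-s))
    (hΦA : ∀ v, ‖densityCharFun f v‖ ≤ A * (1 + √(∑ i, v i ^ 2)) ^ (-s))
    {P ε : ℝ} (hP : 0 < P)
    (hsum : ∀ x : ι → ℝ, (∀ i, |x i| ≤ P / 2) →
      ∑' m : {m : ι → ℤ // m ≠ 0}, ‖f fun i ↦ x i + P * (m : ι → ℤ) i‖ ≤ ε)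
    {S : (ι → ℝ) → ℂ}
    (hS : ∀ x, S x = ((P ^ Fintype.card ι)⁻¹ : ℝ) *
      ∑' m : ι → ℤ, densityCharFun f (fun i ↦ -2 * Real.pi * m i / P) *
        cexp (2 * Real.pi * I * ((∑ i, m i * x i) / P : ℝ))) :
    (∀ q : ℝ, 0 < q → (∫ x in {x : ι → ℝ | ∀ i, |x i| ≤ P / 2}, ‖f x - S x‖ ^ q) ^ (1 / q) ≤
        ε * P ^ ((Fintype.card ι : ℝ) / q)) ∧
      ∀ x : ι → ℝ, (∀ i, |x i| ≤ P / 2) → ‖f x - S x‖ ≤ ε := by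
  have hs0 : 0 ≤ s := (Nat.cast_nonneg _).trans hs.le
  have hfs := isBigO_one_add_norm_of_le_one_add_sqrt_sum_sq hs0 hfA
  have hΦs := isBigO_one_add_norm_of_le_one_add_sqrt_sum_sq hs0 hΦA
  have hc : -2 * Real.pi / P ≠ 0 := by simp [Real.pi_ne_zero, hP.ne']
  have hΦ : Summable fun m : ι → ℤ ↦ densityCharFun f fun i ↦ -2 * Real.pi * m i / P :=
    .of_norm <| by
      simpa only [zero_add, Pi.smul_def, Function.comp_apply, smul_eq_mul, mul_div_right_comm]
        using summable_norm_comp_add_smul_intCast hs hΦs hc 0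
  have hsup (x : ι → ℝ) (hx : ∀ i, |x i| ≤ P / 2) : ‖f x - S x‖ ≤ ε :=
    hS x ▸ (norm_sub_tsum_densityCharFun_le_tsum_norm hP hf hs hfs hΦ x).trans (hsum x hx)
  exact ⟨fun q hq ↦ rpow_setIntegral_cube_norm_rpow_le hP.le hq hsup, hsup⟩

theorem density_fourier_approximation
    (n : ℕ) (hn : 1 ≤ n) (p : (Fin n → ℝ) → ℝ) (hp : Continuous p)
    (hp0 : ∀ x, 0 ≤ p x) (hp1 : ∫ x : Fin n → ℝ, p x = 1)
    (Φ : (Fin n → ℝ) → ℂ)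
    (hΦ : ∀ v : Fin n → ℝ, Φ v =
      ∫ x : Fin n → ℝ, Complex.exp (Complex.I * (∑ k, v k * x k : ℝ)) * (p x : ℂ))
    (A δ : ℝ) (hA : 0 < A) (hδ : 0 < δ)
    (hpb : ∀ x : Fin n → ℝ,
      p x ≤ A * (1 + Real.sqrt (∑ k, x k ^ 2)) ^ (-(n : ℝ) - δ))
    (hΦb : ∀ v : Fin n → ℝ,
      ‖Φ v‖ ≤ A * (1 + Real.sqrt (∑ k, v k ^ 2)) ^ (-(n : ℝ) - δ))
    (P ε : ℝ) (hP : 0 < P) (hε : 0 < ε)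
    (hsum : ∀ x : Fin n → ℝ, (∀ k, |x k| ≤ P / 2) →
      (∑' m : {m : Fin n → ℤ // m ≠ 0}, p (fun k => x k + P * ((m : Fin n → ℤ) k : ℝ))) ≤ ε)
    (S : (Fin n → ℝ) → ℂ)
    (hS : ∀ x, S x = ((P ^ n)⁻¹ : ℝ) *
      ∑' m : Fin n → ℤ,
        Φ (fun k => -2 * Real.pi * (m k : ℝ) / P) *
          Complex.exp (2 * Real.pi * Complex.I * ((∑ k, (m k : ℝ) * x k) / P : ℝ))) :
    (∀ q : ℝ, 1 ≤ q →
      (∫ x in {x : Fin n → ℝ | ∀ k, |x k| ≤ P / 2}, ‖(p x : ℂ) - S x‖ ^ q) ^ (1 / q)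
        ≤ ε * P ^ ((n : ℝ) / q)) ∧
    (∀ x : Fin n → ℝ, (∀ k, |x k| ≤ P / 2) → ‖(p x : ℂ) - S x‖ ≤ ε) := by
  have hnorm (x : Fin n → ℝ) : ‖(p x : ℂ)‖ = p x := Complex.norm_of_nonneg (hp0 x)
  obtain rfl : Φ = densityCharFun fun x ↦ p x := funext hΦ
  rw [← neg_add'] at hpb hΦb
  have hmain := density_fourier_approximation_general (by fun_prop) (by simpa using hδ)
    (by simpa only [hnorm] using hpb) hΦb hP (by simpa only [hnorm] using hsum) (by simpa using hS)
  rw [Fintype.card_fin] at hmain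
  exact ⟨fun q hq ↦ hmain.1 q (by linarith), hmain.2⟩
end

section
/- Let n ≥ 1, ν₁, …, νₙ > 0 and β₁, …, βₙ > 0. For t > 0 let Ω(t) = {x ∈ ℝⁿ : Σ_{s=1}^n β_s |x_s|^{ν_s} ≤ t}, let L(t) be the number of points of ℤⁿ in Ω(t), and let V(t) be the Lebesgue measure of Ω(t). Then L(t)/V(t) → 1 as t → ∞. -/
open MeasureTheory

open Filter Topology

/-!
Let `D_t` be the diagonal map with entries `t ^ (1 / ν s)`. Then `Ω(t) = D_t Ω(1)`, so
`V(t) = det D_t · V(1)`, and `L(t)` is the number of points of the grid `D_t⁻¹ ℤⁿ` in `Ω(1)`. The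
cells of this grid have volume `1 / det D_t` and shrink to points, so `L(t) / det D_t` tends to
`V(1)` as for a Riemann sum, provided that the boundary of `Ω(1)` is null. It is: the boundary lies
in a level set of the homogeneous function defining `Ω`, the level sets of positive value are images
of one another under the maps `D_t`, and only countably many of these disjoint sets can have
positive volume.
-/

variable {ι : Type*}

/-- `g` is homogeneous of degree one under the anisotropic dilations `x ↦ (τ ^ w s * x s)` with
`τ > 0`. Any other nonzero degree is obtained by rescaling the exponents `w`. -/
def IsDilationHomogeneous (w : ι → ℝ) (g : (ι → ℝ) → ℝ) : Prop :=
  ∀ ⦃τ : ℝ⦄, 0 < τ → ∀ x : ι → ℝ, g ((fun s => τ ^ w s) * x) = τ * g x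

namespace IsDilationHomogeneous

variable {w : ι → ℝ} {g : (ι → ℝ) → ℝ}

lemma map_zero (hg : IsDilationHomogeneous w g) : g 0 = 0 := by
  have h := hg two_pos 0
  rw [mul_zero] at h
  linarith

lemma map_div (hg : IsDilationHomogeneous w g) {τ : ℝ} (hτ : 0 < τ) (x : ι → ℝ) :
    g (fun s => x s / τ ^ w s) = g x / τ := by
  rw [eq_div_iff hτ.ne', mul_comm, ← hg hτ]
  congr 1 with s
  exact mul_div_cancel₀ _ (Real.rpow_pos_of_pos hτ _).ne'

lemma natCard_sublevel (hg : IsDilationHomogeneous w g) {τ : ℝ} (hτ : 0 < τ) :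
    Nat.card {m : ι → ℤ // g (fun s => m s) ≤ τ} =
      Nat.card {m : ι → ℤ // g (fun s => m s / τ ^ w s) ≤ 1} := by
  simp only [hg.map_div hτ, div_le_one hτ]

end IsDilationHomogeneous

/-- The coordinatewise integer part of a real vector, which labels the cells of the partition of
`ι → ℝ` into half-open unit cubes. -/
noncomputable def floorVec (x : ι → ℝ) : ι → ℤ := fun s => ⌊x s⌋

/-- The rounding of `x` down to the grid with spacing `1 / d s` in the coordinate `s`. -/
noncomputable def gridFloor (d x : ι → ℝ) : ι → ℝ := fun s => floorVec (d * x) s / d s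

lemma floorVec_preimage_singleton (m : ι → ℤ) :
    floorVec ⁻¹' {m} = Set.univ.pi fun s => Set.Ico (m s : ℝ) (m s + 1) := by
  ext x
  simp [floorVec, funext_iff, Int.floor_eq_iff]

lemma measurable_floorVec : Measurable (floorVec : (ι → ℝ) → ι → ℤ) :=
  measurable_pi_lambda _ fun s => Int.measurable_floor.comp (measurable_pi_apply s)

lemma abs_gridFloor_sub_le {d : ι → ℝ} {s : ι} (hd : 0 < d s) (x : ι → ℝ) :
    |gridFloor d x s - x s| ≤ (d s)⁻¹ := by
  have hfract : gridFloor d x s - x s = -(Int.fract (d s * x s) / d s) := by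
    rw [← Int.self_sub_floor]
    simp only [gridFloor, floorVec, Pi.mul_apply]
    field_simp
    ring
  rw [hfract, abs_neg, abs_div, Int.abs_fract, abs_of_pos hd, ← one_div]
  gcongr
  exact (Int.fract_lt_one _).le

lemma tendsto_gridFloor {α : Type*} {l : Filter α} {d : α → ι → ℝ}
    (hd : ∀ s, Tendsto (fun a => d a s) l atTop) (x : ι → ℝ) :
    Tendsto (fun a => gridFloor (d a) x) l (𝓝 x) := by
  refine tendsto_pi_nhds.2 fun s => tendsto_iff_dist_tendsto_zero.2 ?_
  refine squeeze_zero' (.of_forall fun _ => dist_nonneg) ?_ (hd s).inv_tendsto_atTop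
  filter_upwards [(hd s).eventually_gt_atTop 0] with a ha using abs_gridFloor_sub_le ha x

lemma measurableSet_gridFloor_preimage [Finite ι] (d : ι → ℝ) (A : Set (ι → ℝ)) :
    MeasurableSet (gridFloor d ⁻¹' A) :=
  (measurable_floorVec.comp (measurable_const_mul d))
    {m : ι → ℤ | (fun s => m s / d s) ∈ A}.to_countable.measurableSet

variable [Fintype ι]

lemma measurePreserving_floorVec :
    MeasurePreserving (floorVec : (ι → ℝ) → ι → ℤ) volume Measure.count := by
  refine ⟨measurable_floorVec, Measure.ext_of_singleton fun m => ?_⟩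
  rw [Measure.map_apply measurable_floorVec (measurableSet_singleton m),
    floorVec_preimage_singleton, volume_pi_pi, Measure.count_singleton]
  simp

-- For infinite `S` both sides take the junk value `0`.
lemma volume_real_floorVec_preimage (S : Set (ι → ℤ)) :
    volume.real (floorVec ⁻¹' S) = Nat.card S := by
  rw [measurePreserving_floorVec.measureReal_preimage
      S.to_countable.measurableSet.nullMeasurableSet,
    measureReal_def, Measure.count_apply S.to_countable.measurableSet, Nat.card_coe_set_eq]
  rcases S.finite_or_infinite with hS | hS
  · simp [← hS.cast_ncard_eq]
  · simp [hS.encard_eq, hS.ncard]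

lemma volume_preimage_pi_mul_left {d : ι → ℝ} (hd : ∀ s, d s ≠ 0) (A : Set (ι → ℝ)) :
    volume ((d * ·) ⁻¹' A) = ENNReal.ofReal |(∏ s, d s)⁻¹| * volume A := by
  classical
  have hdet : (Matrix.toLin' (Matrix.diagonal d)).det = ∏ s, d s := by simp
  have hmul : (d * ·) = Matrix.toLin' (Matrix.diagonal d) := by
    ext x s
    simp [Matrix.mulVec_diagonal]
  rw [hmul, Measure.addHaar_preimage_linearMap _ (hdet ▸ Finset.prod_ne_zero_iff.2 fun s _ => hd s),
    hdet]

lemma volume_real_eq_prod_mul_preimage {d : ι → ℝ} (hd : ∀ s, 0 < d s) (A : Set (ι → ℝ)) :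
    volume.real A = (∏ s, d s) * volume.real ((d * ·) ⁻¹' A) := by
  have hprod : 0 < ∏ s, d s := Finset.prod_pos fun s _ => hd s
  rw [measureReal_def, measureReal_def, volume_preimage_pi_mul_left fun s => (hd s).ne',
    ENNReal.toReal_mul, ENNReal.toReal_ofReal (abs_nonneg _), abs_of_pos (inv_pos.2 hprod),
    mul_inv_cancel_left₀ hprod.ne']

lemma natCard_grid_eq_prod_mul_volume {d : ι → ℝ} (hd : ∀ s, 0 < d s) (A : Set (ι → ℝ)) :
    (Nat.card {m : ι → ℤ // (fun s => m s / d s) ∈ A} : ℝ) =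
      (∏ s, d s) * volume.real (gridFloor d ⁻¹' A) :=
  (volume_real_floorVec_preimage {m : ι → ℤ | (fun s => m s / d s) ∈ A}).symm.trans
    (volume_real_eq_prod_mul_preimage hd _)

lemma gridFloor_preimage_subset_cthickening {d : ι → ℝ} (hd : ∀ s, 1 ≤ d s) (A : Set (ι → ℝ)) :
    gridFloor d ⁻¹' A ⊆ Metric.cthickening 1 A := by
  intro x hx
  refine Metric.mem_cthickening_of_dist_le x _ 1 A hx ?_
  rw [dist_comm, dist_pi_le_iff zero_le_one]
  exact fun s => (abs_gridFloor_sub_le (zero_lt_one.trans_le (hd s)) x).trans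
    (inv_le_one_of_one_le₀ (hd s))

lemma tendsto_volume_gridFloor_preimage {α : Type*} {l : Filter α} [l.IsCountablyGenerated]
    {d : α → ι → ℝ} (hd : ∀ s, Tendsto (fun a => d a s) l atTop) {A : Set (ι → ℝ)}
    (hA : Bornology.IsBounded A) (hfr : volume (frontier A) = 0) :
    Tendsto (fun a => volume (gridFloor (d a) ⁻¹' A)) l (𝓝 (volume A)) := by
  rw [← measure_congr (interior_ae_eq_of_null_frontier hfr)]
  refine tendsto_measure_of_ae_tendsto_indicator l measurableSet_interior
    (fun a => measurableSet_gridFloor_preimage (d a) A)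
    Metric.isClosed_cthickening.measurableSet (hA.cthickening (δ := 1)).measure_lt_top.ne ?_ ?_
  · filter_upwards [eventually_all.2 fun s => (hd s).eventually_ge_atTop 1] with a ha
      using gridFloor_preimage_subset_cthickening ha A
  · filter_upwards [measure_eq_zero_iff_ae_notMem.1 hfr] with x hx
    by_cases hxA : x ∈ interior A
    · filter_upwards [(tendsto_gridFloor hd x).eventually (mem_interior_iff_mem_nhds.1 hxA)]
        with a ha using iff_of_true ha hxA
    · have hxc : Aᶜ ∈ 𝓝 x := by
        rw [← mem_interior_iff_mem_nhds, interior_compl]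
        exact fun hcl => hx ⟨hcl, hxA⟩
      filter_upwards [(tendsto_gridFloor hd x).eventually hxc] with a ha using iff_of_false ha hxA

theorem tendsto_natCard_grid_div_prod {α : Type*} {l : Filter α} [l.IsCountablyGenerated]
    {d : α → ι → ℝ} (hd : ∀ s, Tendsto (fun a => d a s) l atTop) {A : Set (ι → ℝ)}
    (hA : Bornology.IsBounded A) (hfr : volume (frontier A) = 0) :
    Tendsto (fun a => (Nat.card {m : ι → ℤ // (fun s => m s / d a s) ∈ A} : ℝ) / ∏ s, d a s) l
      (𝓝 (volume.real A)) := by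
  refine ((ENNReal.tendsto_toReal hA.measure_lt_top.ne).comp
    (tendsto_volume_gridFloor_preimage hd hA hfr)).congr' ?_
  filter_upwards [eventually_all.2 fun s => (hd s).eventually_gt_atTop 0] with a ha
  rw [natCard_grid_eq_prod_mul_volume ha,
    mul_div_cancel_left₀ _ (Finset.prod_pos fun s _ => ha s).ne']
  rfl

namespace IsDilationHomogeneous

variable {w : ι → ℝ} {g : (ι → ℝ) → ℝ}

lemma volume_real_sublevel (hg : IsDilationHomogeneous w g) {τ : ℝ} (hτ : 0 < τ) :
    volume.real {x | g x ≤ τ} = (∏ s, τ ^ w s) * volume.real {x | g x ≤ 1} := by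
  rw [volume_real_eq_prod_mul_preimage fun s => Real.rpow_pos_of_pos hτ (w s)]
  congr 2 with x
  simp [hg hτ, hτ]

lemma volume_level_one (hg : IsDilationHomogeneous w g) (hmeas : Measurable g) :
    volume {x | g x = 1} = 0 := by
  by_contra hne
  have hpos : Set.Ioi (0 : ℝ) ⊆ {τ | 0 < volume {x | g x = τ}} := by
    intro τ (hτ : 0 < τ)
    have hpre : ((fun s => τ ^ w s) * ·) ⁻¹' {x | g x = τ} = {x | g x = 1} := by
      ext x
      simp [hg hτ, hτ.ne']
    rw [← hpre, volume_preimage_pi_mul_left fun s => (Real.rpow_pos_of_pos hτ (w s)).ne'] at hne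
    exact pos_iff_ne_zero.2 (right_ne_zero_of_mul hne)
  have hcard := ((Measure.countable_meas_level_set_pos hmeas).mono hpos).le_aleph0
  rw [Cardinal.mk_Ioi_real] at hcard
  exact Cardinal.aleph0_lt_continuum.not_ge hcard

lemma volume_frontier_sublevel (hg : IsDilationHomogeneous w g) (hcont : Continuous g) :
    volume (frontier {x | g x ≤ 1}) = 0 :=
  measure_mono_null (frontier_le_subset_eq hcont continuous_const)
    (hg.volume_level_one hcont.measurable)

lemma volume_sublevel_pos (hg : IsDilationHomogeneous w g) (hcont : Continuous g) :
    0 < volume {x | g x ≤ 1} := by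
  refine Measure.measure_pos_of_mem_nhds volume (x := 0) ?_
  have h0 : g 0 < 1 := by rw [hg.map_zero]; exact one_pos
  filter_upwards [hcont.continuousAt.eventually_lt_const h0] with x hx using hx.le

end IsDilationHomogeneous

theorem lattice_count_asymptotics_general {w : ι → ℝ} (hw : ∀ s, 0 < w s) {g : (ι → ℝ) → ℝ}
    (hg : IsDilationHomogeneous w g) (hcont : Continuous g)
    (hbdd : Bornology.IsBounded {x | g x ≤ 1}) :
    Tendsto (fun t : ℝ => (Nat.card {m : ι → ℤ // g (fun s => m s) ≤ t} : ℝ) /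
      volume.real {x | g x ≤ t}) atTop (𝓝 1) := by
  have hvol : volume.real {x | g x ≤ 1} ≠ 0 :=
    (ENNReal.toReal_pos (hg.volume_sublevel_pos hcont).ne' hbdd.measure_lt_top.ne).ne'
  have hcount := (tendsto_natCard_grid_div_prod (fun s => tendsto_rpow_atTop (hw s)) hbdd
    (hg.volume_frontier_sublevel hcont)).div_const (volume.real {x | g x ≤ 1})
  rw [div_self hvol] at hcount
  refine hcount.congr' ?_
  filter_upwards [eventually_gt_atTop 0] with t ht
  rw [div_div, ← hg.volume_real_sublevel ht, ← hg.natCard_sublevel ht]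

/-- The function whose sublevel sets are the domains `Ω(t)`. -/
noncomputable def weightedPowerSum (ν β x : ι → ℝ) : ℝ := ∑ s, β s * |x s| ^ ν s

lemma continuous_weightedPowerSum {ν : ι → ℝ} (hν : ∀ s, 0 ≤ ν s) (β : ι → ℝ) :
    Continuous (weightedPowerSum ν β) :=
  continuous_finsetSum _ fun s _ =>
    continuous_const.mul ((continuous_apply s).abs.rpow_const fun _ => .inr (hν s))

lemma isDilationHomogeneous_weightedPowerSum {ν : ι → ℝ} (hν : ∀ s, ν s ≠ 0) (β : ι → ℝ) :
    IsDilationHomogeneous (fun s => (ν s)⁻¹) (weightedPowerSum ν β) := by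
  intro τ hτ x
  simp only [weightedPowerSum, Finset.mul_sum, Pi.mul_apply]
  refine Finset.sum_congr rfl fun s _ => ?_
  have hpos : 0 < τ ^ (ν s)⁻¹ := Real.rpow_pos_of_pos hτ _
  rw [abs_mul, abs_of_pos hpos, Real.mul_rpow hpos.le (abs_nonneg _),
    Real.rpow_inv_rpow hτ.le (hν s), mul_left_comm]

lemma isBounded_weightedPowerSum_le {ν β : ι → ℝ} (hν : ∀ s, 0 < ν s) (hβ : ∀ s, 0 < β s)
    (c : ℝ) : Bornology.IsBounded {x | weightedPowerSum ν β x ≤ c} := by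
  refine (Bornology.IsBounded.pi fun s =>
    Metric.isBounded_Icc (-(c / β s) ^ (ν s)⁻¹) ((c / β s) ^ (ν s)⁻¹)).subset ?_
  intro x (hx : weightedPowerSum ν β x ≤ c) s _
  have hnonneg (i : ι) : 0 ≤ β i * |x i| ^ ν i :=
    mul_nonneg (hβ i).le (Real.rpow_nonneg (abs_nonneg _) _)
  have hterm : β s * |x s| ^ ν s ≤ c :=
    (Finset.single_le_sum (fun i _ => hnonneg i) (Finset.mem_univ s)).trans hx
  have hc : 0 ≤ c / β s := div_nonneg ((hnonneg s).trans hterm) (hβ s).le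
  rw [Set.mem_Icc, ← abs_le, Real.le_rpow_inv_iff_of_pos (abs_nonneg _) hc (hν s)]
  exact (le_div_iff₀' (hβ s)).2 hterm

theorem lattice_count_asymptotics
    (n : ℕ) (hn : 1 ≤ n) (ν β : Fin n → ℝ) (hν : ∀ s, 0 < ν s) (hβ : ∀ s, 0 < β s) :
    Filter.Tendsto
      (fun t : ℝ =>
        (Nat.card {m : Fin n → ℤ // ∑ s, β s * |(m s : ℝ)| ^ ν s ≤ t} : ℝ) /
          (volume {x : Fin n → ℝ | ∑ s, β s * |x s| ^ ν s ≤ t}).toReal)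
      Filter.atTop (nhds 1) :=
  lattice_count_asymptotics_general (g := weightedPowerSum ν β) (fun s => inv_pos.2 (hν s))
    (isDilationHomogeneous_weightedPowerSum (fun s => (hν s).ne') β)
    (continuous_weightedPowerSum (fun s => (hν s).le) β) (isBounded_weightedPowerSum_le hν hβ 1)
end

section
/- Let n ≥ 1, P ≥ 1 an integer, ν₁, …, νₙ ∈ (0,1), β₁, …, βₙ > 0, and let c : ℤⁿ → ℂ satisfy |c_m| ≤ exp( −Σ_{s=1}^n β_s |m_s|^{ν_s} ) for all m ∈ ℤⁿ. Let 2 ≤ p ≤ ∞ and let p' be its conjugate exponent (1/p + 1/p' = 1). Then there exist constants C > 0 and R₀ > 1 such that for all R ≥ R₀, ‖ P^{−n} Σ_{m ∈ ℤⁿ : Σ_s β_s |m_s|^{ν_s} > ln R} c_m e^{2πi⟨m,x⟩/P} ‖_{L^p([−P/2,P/2]ⁿ)} ≤ C · R^{−1} · (ln R)^{(Σ_{s=1}^n 1/ν_s − 1)/p'}. -/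
/-!
Write `g m = ∑ s, β s * |m s| ^ ν s` and `L = log R`. The number of `m ∈ ℤ` with
`⌊β * |m| ^ ν⌋ = K` is `O((K + 1) ^ (1 / ν - 1))`, and convolving these counts over the `n`
coordinates gives `O((K + 1) ^ (∑ 1 / ν s - 1))` lattice points with `∑ ⌊β s * |m s| ^ ν s⌋ = K`.
As this sum of floors differs from `g` by at most `n`, the coefficients with `g m > L` have `ℓ¹`
norm `O(R⁻¹ * L ^ (∑ 1 / ν s - 1))`, while each of them is at most `R⁻¹`. The `ℓ¹` norm bounds the
series uniformly; by Parseval on the torus, the square of its `L²` norm is at most the product of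
the two bounds. Interpolating between `L²` and `L^∞` yields the exponent `1 / p'`.
-/

open MeasureTheory Complex
open scoped ENNReal
open scoped NNReal

/-- `f : α → ℕ` has polynomial fibers of exponent `q` if `#{x | f x = K} = O((K + 1) ^ q)`; this
controls the number of lattice points in a shell. The cardinality is `Set.encard`, so that
finiteness of the fibers is part of the notion. -/
def HasPolynomialFibers {α : Type*} (f : α → ℕ) (q : ℝ) : Prop :=
  ∃ C : ℝ≥0, ∀ K : ℕ, ((f ⁻¹' {K}).encard : ℝ≥0∞) ≤ C * ((K : ℝ≥0∞) + 1) ^ q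

namespace HasPolynomialFibers

variable {α β : Type*} {f : α → ℕ} {g : β → ℕ} {a b : ℝ}

theorem comp_injective (hf : HasPolynomialFibers f a) {e : β → α} (he : e.Injective) :
    HasPolynomialFibers (f ∘ e) a := by
  obtain ⟨C, hC⟩ := hf
  refine ⟨C, fun K ↦ le_trans ?_ (hC K)⟩
  rw [Set.preimage_comp, ENat.toENNReal_le, ← he.encard_image]
  exact Set.encard_le_encard (Set.image_preimage_subset _ _)

theorem add_prod (hf : HasPolynomialFibers f a) (hg : HasPolynomialFibers g b)
    (ha : 0 ≤ a) (hb : 0 ≤ b) :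
    HasPolynomialFibers (fun x : α × β ↦ f x.1 + g x.2) (a + b + 1) := by
  obtain ⟨C, hC⟩ := hf
  obtain ⟨D, hD⟩ := hg
  refine ⟨C * D, fun K ↦ ?_⟩
  have fiber_subset : (fun x : α × β ↦ f x.1 + g x.2) ⁻¹' {K} ⊆
      ⋃ i ∈ Finset.range (K + 1), (f ⁻¹' {i}) ×ˢ (g ⁻¹' {K - i}) := by
    intro x hx
    have hx : f x.1 + g x.2 = K := hx
    simp only [Set.mem_iUnion, Finset.mem_range]
    exact ⟨f x.1, by omega, rfl, by simp only [Set.mem_preimage, Set.mem_singleton_iff]; omega⟩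
  have box_le (i : ℕ) (hi : i ∈ Finset.range (K + 1)) :
      ((((f ⁻¹' {i}) ×ˢ (g ⁻¹' {K - i})).encard : ℕ∞) : ℝ≥0∞) ≤
        C * D * ((K : ℝ≥0∞) + 1) ^ (a + b) := by
    have hiK : i ≤ K := Finset.mem_range_succ_iff.1 hi
    calc
      _ = ((f ⁻¹' {i}).encard : ℝ≥0∞) * (g ⁻¹' {K - i}).encard := by
        rw [Set.encard_prod, ENat.toENNReal_mul]
      _ ≤ C * ((i : ℝ≥0∞) + 1) ^ a * (D * (((K - i : ℕ) : ℝ≥0∞) + 1) ^ b) :=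
        mul_le_mul' (hC i) (hD (K - i))
      _ ≤ C * ((K : ℝ≥0∞) + 1) ^ a * (D * ((K : ℝ≥0∞) + 1) ^ b) := by
        gcongr
        exact Nat.sub_le K i
      _ = _ := by
        rw [ENNReal.rpow_add_of_nonneg _ _ ha hb]
        ring
  calc
    _ ≤ ((∑ i ∈ Finset.range (K + 1), ((f ⁻¹' {i}) ×ˢ (g ⁻¹' {K - i})).encard : ℕ∞) : ℝ≥0∞) :=
      ENat.toENNReal_le.2 ((Set.encard_le_encard fiber_subset).trans
        (Finset.set_encard_biUnion_le _ _))
    _ = ∑ i ∈ Finset.range (K + 1), (((f ⁻¹' {i}) ×ˢ (g ⁻¹' {K - i})).encard : ℝ≥0∞) :=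
      map_sum ENat.toENNRealRingHom _ _
    _ ≤ ∑ i ∈ Finset.range (K + 1), C * D * ((K : ℝ≥0∞) + 1) ^ (a + b) :=
      Finset.sum_le_sum box_le
    _ = (C * D : ℝ≥0) * ((K : ℝ≥0∞) + 1) ^ (a + b + 1) := by
      rw [ENNReal.rpow_add_of_nonneg _ _ (by positivity) zero_le_one, Finset.sum_const,
        Finset.card_range, nsmul_eq_mul, ENNReal.rpow_one]
      push_cast
      ring

theorem sum_pi {n : ℕ} {α : Fin (n + 1) → Type*} {f : ∀ i, α i → ℕ} {q : Fin (n + 1) → ℝ}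
    (hf : ∀ i, HasPolynomialFibers (f i) (q i)) (hq : ∀ i, 0 ≤ q i) :
    HasPolynomialFibers (fun x : ∀ i, α i ↦ ∑ i, f i (x i)) (∑ i, q i + n) := by
  induction n with
  | zero =>
    simpa using! (hf 0).comp_injective
      (show (fun x : ∀ i, α i ↦ x 0).Injective from
        fun x y h ↦ funext (Fin.forall_fin_one.2 h))
  | succ n ih =>
    have h := ((hf 0).add_prod (ih (fun i ↦ hf i.succ) fun i ↦ hq i.succ) (hq 0)
      (add_nonneg (Finset.sum_nonneg fun i _ ↦ hq i.succ) n.cast_nonneg)).comp_injective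
        (Fin.consEquiv α).symm.injective
    convert h using 1
    · funext x
      exact Fin.sum_univ_succ _
    · rw [Fin.sum_univ_succ]
      push_cast
      ring

end HasPolynomialFibers

theorem encard_int_abs_mem_Icc_le {a b : ℝ} (hab : a ≤ b) :
    ((((fun m : ℤ ↦ |(m : ℝ)|) ⁻¹' Set.Icc a b).encard : ℕ∞) : ℝ≥0∞) ≤
      ENNReal.ofReal (2 * (b - a + 1)) := by
  set I : Set ℤ := Set.Icc ⌈a⌉ ⌊b⌋ with hI
  have abs_subset : (fun m : ℤ ↦ |(m : ℝ)|) ⁻¹' Set.Icc a b ⊆ I ∪ -I := by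
    intro m hm
    have habs : |m| ∈ I := by
      rw [hI, ← Int.preimage_Icc, Set.mem_preimage, Int.cast_abs]
      exact hm
    rcases abs_choice m with h | h <;> rw [h] at habs
    exacts [Or.inl habs, Or.inr habs]
  have encard_I : (I.encard : ℝ≥0∞) ≤ ENNReal.ofReal (b - a + 1) := by
    rw [hI, ← Finset.coe_Icc, Set.encard_coe_eq_coe_finsetCard, Int.card_Icc,
      ENat.toENNReal_coe, ← ENNReal.ofReal_natCast]
    refine ENNReal.ofReal_le_ofReal ?_
    rw [← Int.cast_natCast, Int.toNat_eq_max, Int.cast_max]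
    push_cast
    exact max_le (by linarith [Int.floor_le b, Int.le_ceil a]) (by linarith)
  calc
    _ ≤ ((I.encard + (-I).encard : ℕ∞) : ℝ≥0∞) :=
      ENat.toENNReal_le.2 ((Set.encard_le_encard abs_subset).trans (Set.encard_union_le _ _))
    _ = I.encard + I.encard := by
      rw [ENat.toENNReal_add, ← Set.image_neg_eq_neg, neg_injective.encard_image]
    _ ≤ ENNReal.ofReal (b - a + 1) + ENNReal.ofReal (b - a + 1) := add_le_add encard_I encard_I
    _ = _ := by rw [← two_mul, ENNReal.ofReal_mul zero_le_two, ENNReal.ofReal_ofNat]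

theorem rpow_add_one_sub_rpow_le {x α : ℝ} (hx : 0 ≤ x) (hα : 1 ≤ α) :
    (x + 1) ^ α - x ^ α ≤ α * (x + 1) ^ (α - 1) := by
  have hx1 : 0 < x + 1 := by positivity
  have bernoulli : 1 - α / (x + 1) ≤ (x / (x + 1)) ^ α := by
    have h := one_add_mul_self_le_rpow_one_add (s := -1 / (x + 1))
      (by rw [le_div_iff₀ hx1]; linarith) hα
    convert h using 1
    · ring
    · congr 1
      field_simp
      ring
  calc
    (x + 1) ^ α - x ^ α = (x + 1) ^ α * (1 - (x / (x + 1)) ^ α) := by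
      rw [Real.div_rpow hx hx1.le]
      field_simp
    _ ≤ (x + 1) ^ α * (α / (x + 1)) := by gcongr; linarith
    _ = α * (x + 1) ^ (α - 1) := by
      rw [Real.rpow_sub_one hx1.ne']
      ring

theorem hasPolynomialFibers_floor_mul_abs_rpow {β ν : ℝ} (hβ : 0 < β) (hν : ν ∈ Set.Ioc 0 1) :
    HasPolynomialFibers (fun m : ℤ ↦ ⌊β * |(m : ℝ)| ^ ν⌋₊) (1 / ν - 1) := by
  obtain ⟨hν0, hν1⟩ := hν
  set α := 1 / ν with hα
  have hα1 : 1 ≤ α := one_le_one_div hν0 hν1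
  set D := β⁻¹ ^ α * α with hD
  refine ⟨(2 * (D + 1)).toNNReal, fun K ↦ ?_⟩
  set r : ℝ → ℝ := fun t ↦ (t / β) ^ α
  have fiber_subset : (fun m : ℤ ↦ ⌊β * |(m : ℝ)| ^ ν⌋₊) ⁻¹' {K} ⊆
      (fun m : ℤ ↦ |(m : ℝ)|) ⁻¹' Set.Icc (r K) (r (K + 1)) := by
    intro m hm
    have hfloor := (Nat.floor_eq_iff (by positivity)).1 (show ⌊β * |(m : ℝ)| ^ ν⌋₊ = K from hm)
    have hr : |(m : ℝ)| = r (β * |(m : ℝ)| ^ ν) := by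
      simp only [r]
      rw [mul_div_cancel_left₀ _ hβ.ne', hα, one_div, Real.rpow_rpow_inv (abs_nonneg _) hν0.ne']
    rw [Set.mem_preimage, hr]
    simp only [r]
    constructor <;> gcongr
    exacts [hfloor.1, hfloor.2.le]
  have hK : (1 : ℝ) ≤ K + 1 := by simp
  have length_le : r (K + 1) - r K ≤ D * ((K : ℝ) + 1) ^ (α - 1) := by
    simp only [r]
    rw [div_eq_mul_inv, div_eq_mul_inv, Real.mul_rpow (by positivity) (by positivity),
      Real.mul_rpow (by positivity) (by positivity), ← sub_mul, hD, mul_comm, mul_assoc]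
    gcongr
    exact rpow_add_one_sub_rpow_le K.cast_nonneg hα1
  calc
    _ ≤ ENNReal.ofReal (2 * (r (K + 1) - r K + 1)) :=
      (ENat.toENNReal_le.2 (Set.encard_le_encard fiber_subset)).trans
        (encard_int_abs_mem_Icc_le (by simp only [r]; gcongr; simp))
    _ ≤ ENNReal.ofReal (2 * (D + 1) * ((K : ℝ) + 1) ^ (α - 1)) := by
      refine ENNReal.ofReal_le_ofReal ?_
      linarith [Real.one_le_rpow hK (sub_nonneg.2 hα1)]
    _ = _ := by
      rw [ENNReal.ofReal_mul (by positivity), ENNReal.ofReal,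
        ← ENNReal.ofReal_rpow_of_nonneg (by positivity) (sub_nonneg.2 hα1),
        ENNReal.ofReal_add (by positivity) zero_le_one, ENNReal.ofReal_natCast, ENNReal.ofReal_one]

theorem tsum_comp_eq_tsum_encard_mul {α β : Type*} (f : α → β) (φ : β → ℝ≥0∞) :
    ∑' x, φ (f x) = ∑' k, ((f ⁻¹' {k}).encard : ℝ≥0∞) * φ k := by
  rw [← ENNReal.tsum_fiberwise _ f]
  refine tsum_congr fun k ↦ ?_
  rw [← ENNReal.tsum_set_const]
  exact tsum_congr fun x ↦ congrArg φ x.2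

theorem tsum_add_one_rpow_mul_exp_neg_ne_top (q : ℝ) :
    ∑' j : ℕ, ((j : ℝ≥0∞) + 1) ^ q * ENNReal.ofReal (Real.exp (-j)) ≠ ⊤ := by
  have summable_pow : Summable fun j : ℕ ↦
      Real.exp 1 * (((j + 1 : ℕ) : ℝ) ^ ⌈q⌉₊ * Real.exp (-1 * (j + 1 : ℕ))) :=
    ((summable_nat_add_iff 1).2
      (Real.summable_pow_mul_exp_neg_nat_mul ⌈q⌉₊ zero_lt_one)).mul_left _
  refine ne_top_of_le_ne_top summable_pow.tsum_ofReal_ne_top (ENNReal.tsum_le_tsum fun j ↦ ?_)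
  calc
    ((j : ℝ≥0∞) + 1) ^ q * ENNReal.ofReal (Real.exp (-j))
      ≤ ((j : ℝ≥0∞) + 1) ^ (⌈q⌉₊ : ℝ) * ENNReal.ofReal (Real.exp (-j)) := by
        gcongr
        · exact le_add_self
        · exact Nat.le_ceil q
    _ = ENNReal.ofReal (((j + 1 : ℕ) : ℝ) ^ ⌈q⌉₊ * Real.exp (-j)) := by
        rw [ENNReal.ofReal_mul (by positivity), ENNReal.ofReal_pow (by positivity),
          ENNReal.ofReal_natCast, ENNReal.rpow_natCast]
        push_cast
        rfl
    _ = _ := by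
        rw [mul_left_comm, ← Real.exp_add]
        congr 3
        push_cast
        ring

namespace HasPolynomialFibers

variable {α : Type*} {f : α → ℕ} {q : ℝ}

theorem exists_encard_sub_fiber_le (hf : HasPolynomialFibers f q) (hq : 0 ≤ q) :
    ∃ C : ℝ≥0, ∀ N j : ℕ, (((fun x : {x // N ≤ f x} ↦ f x - N) ⁻¹' {j}).encard : ℝ≥0∞) ≤
      C * ((N : ℝ≥0∞) + 1) ^ q * ((j : ℝ≥0∞) + 1) ^ q := by
  obtain ⟨C, hC⟩ := hf
  refine ⟨C, fun N j ↦ ?_⟩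
  have image_subset :
      Subtype.val '' ((fun x : {x // N ≤ f x} ↦ f x - N) ⁻¹' {j}) ⊆ f ⁻¹' {N + j} := by
    rintro _ ⟨⟨x, hx⟩, hxj, rfl⟩
    have hxj : f x - N = j := hxj
    change f x = N + j
    omega
  calc
    _ ≤ ((f ⁻¹' {N + j}).encard : ℝ≥0∞) := by
      rw [ENat.toENNReal_le, ← Subtype.val_injective.encard_image]
      exact Set.encard_le_encard image_subset
    _ ≤ C * (((N + j : ℕ) : ℝ≥0∞) + 1) ^ q := hC _
    _ ≤ C * (((N : ℝ≥0∞) + 1) * ((j : ℝ≥0∞) + 1)) ^ q := by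
      gcongr
      norm_cast
      nlinarith [Nat.zero_le (N * j)]
    _ = _ := by rw [ENNReal.mul_rpow_of_nonneg _ _ hq, mul_assoc]

theorem exists_tsum_exp_neg_nat_le (hf : HasPolynomialFibers f q) (hq : 0 ≤ q) :
    ∃ A : ℝ≥0, ∀ N : ℕ, ∑' x : {x // N ≤ f x}, ENNReal.ofReal (Real.exp (-f x)) ≤
      A * ((N : ℝ≥0∞) + 1) ^ q * ENNReal.ofReal (Real.exp (-N)) := by
  obtain ⟨C, encard_excess_le⟩ := hf.exists_encard_sub_fiber_le hq
  lift ∑' j : ℕ, ((j : ℝ≥0∞) + 1) ^ q * ENNReal.ofReal (Real.exp (-j)) to ℝ≥0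
    using tsum_add_one_rpow_mul_exp_neg_ne_top q with D hD
  refine ⟨C * D, fun N ↦ ?_⟩
  let excess : {x // N ≤ f x} → ℕ := fun x ↦ f x - N
  calc
    _ = ∑' x : {x // N ≤ f x}, ENNReal.ofReal (Real.exp (-N) * Real.exp (-excess x)) := by
      refine tsum_congr fun x ↦ ?_
      rw [← Real.exp_add, Nat.cast_sub x.2]
      ring_nf
    _ = ∑' j : ℕ, ((excess ⁻¹' {j}).encard : ℝ≥0∞) *
          ENNReal.ofReal (Real.exp (-N) * Real.exp (-j)) :=
      tsum_comp_eq_tsum_encard_mul excess fun j ↦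
        ENNReal.ofReal (Real.exp (-N) * Real.exp (-j))
    _ ≤ ∑' j : ℕ, C * ((N : ℝ≥0∞) + 1) ^ q * ENNReal.ofReal (Real.exp (-N)) *
          (((j : ℝ≥0∞) + 1) ^ q * ENNReal.ofReal (Real.exp (-j))) := by
      refine ENNReal.tsum_le_tsum fun j ↦ (mul_le_mul_left (encard_excess_le N j) _).trans_eq ?_
      rw [ENNReal.ofReal_mul (by positivity)]
      ring
    _ = _ := by
      rw [ENNReal.tsum_mul_left, ← hD]
      push_cast
      ring

theorem exists_tsum_exp_neg_le (hf : HasPolynomialFibers f q) (hq : 0 ≤ q) {g : α → ℝ} {d : ℝ}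
    (hd : 0 ≤ d) (hfg : ∀ x, f x ≤ g x) (hgf : ∀ x, g x ≤ f x + d) :
    ∃ A > (0 : ℝ), ∀ L ≥ (1 : ℝ), ∑' x : {x // L < g x}, ENNReal.ofReal (Real.exp (-g x)) ≤
      ENNReal.ofReal (A * (Real.exp (-L) * L ^ q)) := by
  obtain ⟨A, hA⟩ := hf.exists_tsum_exp_neg_nat_le hq
  refine ⟨(A + 1) * 2 ^ q * Real.exp (d + 1), by positivity, fun L hL ↦ ?_⟩
  set N := ⌊L - d⌋₊
  have le_of_lt_weight (x : α) (hx : L < g x) : N ≤ f x :=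
    Nat.floor_le_of_le (by linarith [hgf x])
  have N_add_one_le : (N : ℝ) + 1 ≤ 2 * L := by
    have h : (N : ℝ) ≤ L := (Nat.cast_le.2 (Nat.floor_le_floor (sub_le_self L hd))).trans
      (Nat.floor_le (by linarith))
    linarith
  have neg_N_le : -(N : ℝ) ≤ d + 1 + -L := by linarith [Nat.lt_floor_add_one (L - d)]
  calc
    _ ≤ ∑' x : {x // L < g x}, ENNReal.ofReal (Real.exp (-f x)) := by
      gcongr with x
      exact hfg x
    _ ≤ ∑' x : {x // N ≤ f x}, ENNReal.ofReal (Real.exp (-f x)) :=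
      ENNReal.tsum_mono_subtype (fun x ↦ ENNReal.ofReal (Real.exp (-f x))) le_of_lt_weight
    _ ≤ A * ((N : ℝ≥0∞) + 1) ^ q * ENNReal.ofReal (Real.exp (-N)) := hA N
    _ = ENNReal.ofReal (A * ((N : ℝ) + 1) ^ q * Real.exp (-N)) := by
      rw [ENNReal.ofReal_mul (by positivity), ENNReal.ofReal_mul A.coe_nonneg,
        ← ENNReal.ofReal_rpow_of_nonneg (by positivity) hq,
        ENNReal.ofReal_add (by positivity) zero_le_one, ENNReal.ofReal_natCast,
        ENNReal.ofReal_one, ENNReal.ofReal_coe_nnreal]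
    _ ≤ ENNReal.ofReal ((A + 1) * (2 * L) ^ q * Real.exp (d + 1 + -L)) := by
      gcongr
      linarith
    _ = _ := by
      rw [Real.mul_rpow zero_le_two (by linarith), Real.exp_add]
      ring_nf

end HasPolynomialFibers

theorem eLpNorm_le_rpow_mul_eLpNorm_rpow {X E : Type*} [MeasurableSpace X] [ENorm E]
    {μ : Measure X} {f : X → E} {p q : ℝ≥0∞} (hq : q ≠ 0) (hqp : q ≤ p) {M : ℝ≥0}
    (hf : ∀ᵐ x ∂μ, ‖f x‖ₑ ≤ M) :
    eLpNorm f p μ ≤ M ^ (1 - (q / p).toReal) * eLpNorm f q μ ^ (q / p).toReal := by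
  by_cases hp : p = ⊤
  · simpa [hp] using eLpNormEssSup_le_of_ae_enorm_bound hf
  have hp0 : p ≠ 0 := (pos_of_ne_zero hq |>.trans_le hqp).ne'
  have hq' : q ≠ ⊤ := ne_top_of_le_ne_top hp hqp
  have hs : 0 < q.toReal := ENNReal.toReal_pos hq hq'
  have hsr : q.toReal ≤ p.toReal := ENNReal.toReal_mono hp hqp
  rw [ENNReal.toReal_div, eLpNorm_eq_lintegral_rpow_enorm_toReal hp0 hp,
    eLpNorm_eq_lintegral_rpow_enorm_toReal hq hq']
  set r := p.toReal
  set s := q.toReal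
  have hr : 0 < r := hs.trans_le hsr
  have lintegral_le : ∫⁻ x, ‖f x‖ₑ ^ r ∂μ ≤ M ^ (r - s) * ∫⁻ x, ‖f x‖ₑ ^ s ∂μ := by
    rw [← lintegral_const_mul' _ _
      (ENNReal.rpow_ne_top_of_nonneg (sub_nonneg.2 hsr) ENNReal.coe_ne_top)]
    refine lintegral_mono_ae (hf.mono fun x hx ↦ ?_)
    calc
      ‖f x‖ₑ ^ r = ‖f x‖ₑ ^ (r - s) * ‖f x‖ₑ ^ s := by
        rw [← ENNReal.rpow_add_of_nonneg _ _ (sub_nonneg.2 hsr) hs.le, sub_add_cancel]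
      _ ≤ M ^ (r - s) * ‖f x‖ₑ ^ s := by
        gcongr
  calc
    _ ≤ (M ^ (r - s) * ∫⁻ x, ‖f x‖ₑ ^ s ∂μ) ^ (1 / r) := by gcongr
    _ = _ := by
      rw [ENNReal.mul_rpow_of_nonneg _ _ (by positivity), ← ENNReal.rpow_mul, ← ENNReal.rpow_mul]
      congr 2 <;> field_simp

theorem hasSum_sq_norm_of_orthonormal {𝕜 E ι : Type*} [RCLike 𝕜] [SeminormedAddCommGroup E]
    [InnerProductSpace 𝕜 E] {v : ι → E} (hv : Orthonormal 𝕜 v) {a : ι → 𝕜} {x : E}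
    (hx : HasSum (fun i ↦ a i • v i) x) : HasSum (fun i ↦ ‖a i‖ ^ 2) (‖x‖ ^ 2) := by
  classical
  refine (hx.norm.pow 2).congr fun s ↦ ?_
  rw [← RCLike.ofReal_inj (K := 𝕜), RCLike.ofReal_pow, ← inner_self_eq_norm_sq_to_K,
    hv.inner_sum]
  push_cast
  exact Finset.sum_congr rfl fun i _ ↦ RCLike.conj_mul _

section UnitAddTorus

open UnitAddTorus

-- `orthonormal_mFourier` is stated for this measure, through an instance local to its own file.
noncomputable local instance : MeasureSpace UnitAddCircle := ⟨AddCircle.haarAddCircle⟩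

local instance : IsProbabilityMeasure (volume : Measure UnitAddCircle) :=
  inferInstanceAs (IsProbabilityMeasure AddCircle.haarAddCircle)

variable {ι : Type*} [Fintype ι] {a : (ι → ℤ) → ℂ}

theorem hasSum_mFourier (ha : Summable fun m ↦ ‖a m‖) :
    HasSum (fun m ↦ a m • mFourier m) (∑' m, a m • (mFourier m : C(UnitAddTorus ι, ℂ))) :=
  (Summable.of_norm (by simpa [norm_smul, mFourier_norm] using ha)).hasSum

theorem tsum_smul_mFourier_apply (ha : Summable fun m ↦ ‖a m‖) (y : UnitAddTorus ι) :
    (∑' m, a m • mFourier m : C(UnitAddTorus ι, ℂ)) y = ∑' m, a m * mFourier m y :=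
  (ContinuousMap.hasSum_apply (hasSum_mFourier ha) y).tsum_eq.symm

theorem continuous_tsum_mFourier (ha : Summable fun m ↦ ‖a m‖) :
    Continuous fun y : UnitAddTorus ι ↦ ∑' m, a m * mFourier m y := by
  simp_rw [← tsum_smul_mFourier_apply ha]
  exact ContinuousMap.continuous _

theorem eLpNorm_tsum_mFourier_sq (ha : Summable fun m ↦ ‖a m‖) :
    eLpNorm (fun y : UnitAddTorus ι ↦ ∑' m, a m * mFourier m y) 2 volume ^ 2 =
      ∑' m, ‖a m‖ₑ ^ 2 := by
  set F : C(UnitAddTorus ι, ℂ) := ∑' m, a m • mFourier m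
  have coe_F : (fun y ↦ ∑' m, a m * mFourier m y) = F :=
    funext fun y ↦ (tsum_smul_mFourier_apply ha y).symm
  set G := ContinuousMap.toLp (E := ℂ) 2 volume ℂ F
  have parseval : HasSum (fun m ↦ ‖a m‖ ^ 2) (‖G‖ ^ 2) :=
    hasSum_sq_norm_of_orthonormal orthonormal_mFourier
      (by simpa using (ContinuousMap.toLp (E := ℂ) 2 volume ℂ).hasSum (hasSum_mFourier ha))
  calc
    _ = ‖G‖ₑ ^ 2 := by
      rw [coe_F, Lp.enorm_def, eLpNorm_congr_ae (ContinuousMap.coeFn_toLp volume F)]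
    _ = ENNReal.ofReal (∑' m, ‖a m‖ ^ 2) := by
      rw [parseval.tsum_eq, ENNReal.ofReal_pow (norm_nonneg _), ofReal_norm]
    _ = ∑' m, ‖a m‖ₑ ^ 2 := by
      rw [ENNReal.ofReal_tsum_of_nonneg (fun m ↦ by positivity) parseval.summable]
      simp_rw [ENNReal.ofReal_pow (norm_nonneg _), ofReal_norm]

theorem mFourier_coe_div (m : ι → ℤ) (P : ℝ) (x : ι → ℝ) :
    mFourier m (fun k ↦ ((x k / P : ℝ) : UnitAddCircle)) =
      Complex.exp (2 * Real.pi * Complex.I * ((∑ k, (m k : ℝ) * x k) / P : ℝ)) := by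
  change ∏ k, fourier (m k) ((x k / P : ℝ) : UnitAddCircle) = _
  simp only [fourier_coe_apply]
  rw [← Complex.exp_sum]
  push_cast
  rw [Finset.sum_div, Finset.mul_sum]
  exact congrArg Complex.exp (Finset.sum_congr rfl fun k _ ↦ by ring)

theorem enorm_tsum_mFourier_le (y : UnitAddTorus ι) :
    ‖∑' m, a m * mFourier m y‖ₑ ≤ ∑' m, ‖a m‖ₑ := by
  refine enorm_tsum_le_tsum_enorm.trans (ENNReal.tsum_le_tsum fun m ↦ ?_)
  rw [enorm_le_iff_norm_le, norm_mul]
  exact mul_le_of_le_one_right (norm_nonneg _)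
    (by simpa only [mFourier_norm] using (mFourier m).norm_coe_le_norm y)

theorem eLpNorm_tsum_mFourier_le {p : ℝ≥0∞} (hp : 2 ≤ p) {ε S : ℝ≥0}
    (hε : ∀ m, ‖a m‖ₑ ≤ ε) (hS : ∑' m, ‖a m‖ₑ ≤ S) :
    eLpNorm (fun y : UnitAddTorus ι ↦ ∑' m, a m * mFourier m y) p volume ≤
      ε ^ (1 / p).toReal * S ^ (1 - (1 / p).toReal) := by
  have ha : Summable fun m ↦ ‖a m‖ :=
    summable_norm_iff.2 (Summable.of_enorm (ne_top_of_le_ne_top ENNReal.coe_ne_top hS))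
  set F := fun y : UnitAddTorus ι ↦ ∑' m, a m * mFourier m y
  have enorm_F_le (y : UnitAddTorus ι) : ‖F y‖ₑ ≤ S :=
    (enorm_tsum_mFourier_le y).trans hS
  have sq_le : eLpNorm F 2 volume ^ 2 ≤ ε * S := by
    rw [eLpNorm_tsum_mFourier_sq ha]
    calc
      ∑' m, ‖a m‖ₑ ^ 2 ≤ ∑' m, ε * ‖a m‖ₑ := by
        gcongr with m
        rw [sq]
        gcongr
        exact hε m
      _ ≤ ε * S := by
        rw [ENNReal.tsum_mul_left]
        gcongr
  have toReal_two_div : (2 / p).toReal = 2 * (1 / p).toReal := by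
    simp [div_eq_mul_inv]
  have two_mul_theta_le : 2 * (1 / p).toReal ≤ 1 := by
    rw [← toReal_two_div]
    exact ENNReal.toReal_le_of_le_ofReal zero_le_one
      (by simpa using ENNReal.div_le_of_le_mul (by simpa using hp))
  set θ := (1 / p).toReal
  have hθ : 0 ≤ θ := ENNReal.toReal_nonneg
  calc
    eLpNorm F p volume ≤ S ^ (1 - 2 * θ) * eLpNorm F 2 volume ^ (2 * θ) := by
      rw [← toReal_two_div]
      exact eLpNorm_le_rpow_mul_eLpNorm_rpow two_ne_zero hp (Filter.Eventually.of_forall enorm_F_le)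
    _ ≤ S ^ (1 - 2 * θ) * (ε * S) ^ θ := by
      rw [ENNReal.rpow_mul, ENNReal.rpow_two]
      gcongr
    _ = ε ^ θ * S ^ (1 - θ) := by
      rw [ENNReal.mul_rpow_of_nonneg _ _ hθ, mul_left_comm,
        ← ENNReal.rpow_add_of_nonneg _ _ (by linarith) hθ]
      ring_nf

theorem measurePreserving_div_unitAddTorus {P : ℝ} (hP : 0 < P) :
    MeasurePreserving (fun (x : ι → ℝ) k ↦ ((x k / P : ℝ) : UnitAddCircle))
      (volume.restrict {x | ∀ k, |x k| ≤ P / 2})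
      (ENNReal.ofReal (P ^ Fintype.card ι) • volume) := by
  have scale : MeasurePreserving (fun x : ι → ℝ ↦ P⁻¹ • x) volume
      (ENNReal.ofReal (P ^ Fintype.card ι) • volume) := by
    refine ⟨measurable_const_smul _, ?_⟩
    rw [Measure.map_addHaar_smul _ (inv_ne_zero hP.ne'), Module.finrank_fintype_fun_eq_card,
      inv_pow, inv_inv, abs_of_pos (by positivity)]
  have project : MeasurePreserving (fun (x : ι → ℝ) k ↦ (x k : UnitAddCircle))
      (volume.restrict (Set.Icc (fun _ ↦ -(1 / 2)) fun _ ↦ -(1 / 2) + 1)) volume := by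
    have mk (_ : ι) : MeasurePreserving ((↑) : ℝ → UnitAddCircle)
        (volume.restrict (Set.Ioc (-(1 / 2)) (-(1 / 2) + 1))) AddCircle.haarAddCircle := by
      simpa [AddCircle.volume_eq_smul_haarAddCircle] using
        UnitAddCircle.measurePreserving_mk (-(1 / 2))
    rw [volume_pi, ← Measure.restrict_congr_set Measure.univ_pi_Ioc_ae_eq_Icc,
      Measure.restrict_pi_pi]
    exact measurePreserving_pi _ _ mk
  have preimage_cube : (fun x : ι → ℝ ↦ P⁻¹ • x) ⁻¹'
      Set.Icc (fun _ ↦ -(1 / 2)) (fun _ ↦ -(1 / 2) + 1) = {x | ∀ k, |x k| ≤ P / 2} := by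
    ext x
    simp only [Set.mem_preimage, Set.mem_Icc, Pi.le_def, ← forall_and, Set.mem_ofPred_eq]
    refine forall_congr' fun k ↦ ?_
    rw [abs_le, Pi.smul_apply, smul_eq_mul, inv_mul_le_iff₀ hP, le_inv_mul_iff₀ hP]
    constructor <;> rintro ⟨h₁, h₂⟩ <;> constructor <;> linarith
  have restrict_scale := scale.restrict_preimage
    (measurableSet_Icc (a := fun _ ↦ -(1 / 2)) (b := fun _ ↦ -(1 / 2) + 1))
  rw [preimage_cube, Measure.restrict_smul] at restrict_scale
  convert (project.smul_measure _).comp restrict_scale using 1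
  funext x k
  simp [div_eq_inv_mul]

theorem eLpNorm_tsum_subtype_exp_le {P : ℝ} (hP : 0 < P) {p : ℝ≥0∞} (hp : 2 ≤ p) {ε S : ℝ≥0}
    {s : Set (ι → ℤ)} (hε : ∀ m ∈ s, ‖a m‖ₑ ≤ ε) (hS : ∑' m : s, ‖a m‖ₑ ≤ S) :
    eLpNorm (fun x : ι → ℝ ↦ ∑' m : s, a m * Complex.exp (2 * Real.pi * Complex.I *
        ((∑ k, ((m : ι → ℤ) k : ℝ) * x k) / P : ℝ))) p (volume.restrict {x | ∀ k, |x k| ≤ P / 2}) ≤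
      ENNReal.ofReal (P ^ Fintype.card ι) ^ (1 / p).toReal *
        (ε ^ (1 / p).toReal * S ^ (1 - (1 / p).toReal)) := by
  set b : (ι → ℤ) → ℂ := s.indicator a
  have hb_le (m : ι → ℤ) : ‖b m‖ₑ ≤ ε := by
    by_cases hm : m ∈ s <;> simp [b, hm, hε]
  have tsum_b_le : ∑' m, ‖b m‖ₑ ≤ S := by
    simp only [b, enorm_indicator_eq_indicator_enorm]
    rwa [← tsum_subtype]
  have hb : Summable fun m ↦ ‖b m‖ :=
    summable_norm_iff.2 (Summable.of_enorm (ne_top_of_le_ne_top ENNReal.coe_ne_top tsum_b_le))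
  set F := fun y : UnitAddTorus ι ↦ ∑' m, b m * mFourier m y
  have series_eq : (fun x : ι → ℝ ↦ ∑' m : s, a m * Complex.exp (2 * Real.pi * Complex.I *
      ((∑ k, ((m : ι → ℤ) k : ℝ) * x k) / P : ℝ))) =
        F ∘ fun x k ↦ ((x k / P : ℝ) : UnitAddCircle) := by
    funext x
    simp only [F, b, Function.comp_apply, mFourier_coe_div]
    rw [tsum_subtype s fun m ↦ a m * Complex.exp (2 * Real.pi * Complex.I *
      ((∑ k, (m k : ℝ) * x k) / P : ℝ))]
    exact tsum_congr fun m ↦ Set.indicator_mul_left s a _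
  rw [series_eq, eLpNorm_comp_measurePreserving
      (continuous_tsum_mFourier hb).aestronglyMeasurable (measurePreserving_div_unitAddTorus hP),
    eLpNorm_smul_measure_of_ne_zero (by positivity), smul_eq_mul]
  gcongr
  exact eLpNorm_tsum_mFourier_le hp hb_le tsum_b_le

theorem eLpNorm_inv_mul_tsum_subtype_exp_le {P : ℝ} (hP : 0 < P) {p : ℝ≥0∞} (hp : 2 ≤ p)
    {ε S : ℝ} (hε0 : 0 ≤ ε) (hS0 : 0 ≤ S) {s : Set (ι → ℤ)}
    (hε : ∀ m ∈ s, ‖a m‖ₑ ≤ ENNReal.ofReal ε) (hS : ∑' m : s, ‖a m‖ₑ ≤ ENNReal.ofReal S) :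
    eLpNorm (fun x : ι → ℝ ↦ ((P ^ Fintype.card ι)⁻¹ : ℝ) * ∑' m : s,
        a m * Complex.exp (2 * Real.pi * Complex.I *
          ((∑ k, ((m : ι → ℤ) k : ℝ) * x k) / P : ℝ)))
      p (volume.restrict {x | ∀ k, |x k| ≤ P / 2}) ≤
      ENNReal.ofReal (ε ^ (1 / p).toReal * (S / P ^ Fintype.card ι) ^ (1 - (1 / p).toReal)) := by
  have hθ1 : 0 ≤ 1 - (1 / p).toReal := by
    rw [sub_nonneg, ← ENNReal.toReal_one]
    exact ENNReal.toReal_mono ENNReal.one_ne_top (by simpa using one_le_two.trans hp)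
  have hθ0 : 0 ≤ (1 / p).toReal := ENNReal.toReal_nonneg
  have series_le := eLpNorm_tsum_subtype_exp_le hP hp hε hS
  set F := fun x : ι → ℝ ↦ ∑' m : s,
    a m * Complex.exp (2 * Real.pi * Complex.I * ((∑ k, ((m : ι → ℤ) k : ℝ) * x k) / P : ℝ))
  set V := P ^ Fintype.card ι
  have hV : 0 < V := by positivity
  set θ := (1 / p).toReal
  calc
    _ = ‖((V⁻¹ : ℝ) : ℂ)‖ₑ * eLpNorm F p (volume.restrict {x | ∀ k, |x k| ≤ P / 2}) :=
      eLpNorm_const_smul ((V⁻¹ : ℝ) : ℂ) F p _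
    _ ≤ ENNReal.ofReal V⁻¹ * (ENNReal.ofReal V ^ θ *
          (ENNReal.ofReal ε ^ θ * ENNReal.ofReal S ^ (1 - θ))) := by
      rw [← ofReal_norm, Complex.norm_of_nonneg (by positivity)]
      gcongr
      exact series_le
    _ = ENNReal.ofReal (V⁻¹ * (V ^ θ * (ε ^ θ * S ^ (1 - θ)))) := by
      rw [ENNReal.ofReal_rpow_of_nonneg hV.le hθ0, ENNReal.ofReal_rpow_of_nonneg hε0 hθ0,
        ENNReal.ofReal_rpow_of_nonneg hS0 hθ1, ENNReal.ofReal_mul (by positivity),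
        ENNReal.ofReal_mul (by positivity), ENNReal.ofReal_mul (by positivity)]
    _ = _ := by
      rw [Real.div_rpow hS0 hV.le, Real.rpow_sub hV, Real.rpow_one]
      field_simp

theorem eLpNorm_tail_exp_series_le {P : ℝ} (hP : 0 < P) {p : ℝ≥0∞} (hp : 2 ≤ p)
    {g : (ι → ℤ) → ℝ} (ha : ∀ m, ‖a m‖ ≤ Real.exp (-g m)) {L B : ℝ} (hB : 0 ≤ B)
    (hg : ∑' m : {m // L < g m}, ENNReal.ofReal (Real.exp (-g m)) ≤
      ENNReal.ofReal (Real.exp (-L) * B)) :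
    eLpNorm (fun x : ι → ℝ ↦ ((P ^ Fintype.card ι)⁻¹ : ℝ) * ∑' m : {m // L < g m},
        a m * Complex.exp (2 * Real.pi * Complex.I *
          ((∑ k, ((m : ι → ℤ) k : ℝ) * x k) / P : ℝ)))
      p (volume.restrict {x | ∀ k, |x k| ≤ P / 2}) ≤
      ENNReal.ofReal (Real.exp (-L) * (B / P ^ Fintype.card ι) ^ (1 - (1 / p).toReal)) := by
  have enorm_le (m : ι → ℤ) : ‖a m‖ₑ ≤ ENNReal.ofReal (Real.exp (-g m)) := by
    rw [← ofReal_norm]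
    exact ENNReal.ofReal_le_ofReal (ha m)
  have enorm_le_of_lt (m) (hm : L < g m) : ‖a m‖ₑ ≤ ENNReal.ofReal (Real.exp (-L)) :=
    (enorm_le m).trans (ENNReal.ofReal_le_ofReal (Real.exp_le_exp.2 (neg_le_neg hm.le)))
  refine (eLpNorm_inv_mul_tsum_subtype_exp_le hP hp (by positivity) (by positivity) enorm_le_of_lt
    ((ENNReal.tsum_le_tsum fun m : {m // L < g m} ↦ enorm_le m).trans hg)).trans_eq ?_
  rw [mul_div_assoc, Real.mul_rpow (by positivity) (by positivity), ← mul_assoc,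
    ← Real.rpow_add (by positivity), add_sub_cancel, Real.rpow_one]

end UnitAddTorus

theorem exists_tsum_exp_neg_sum_mul_abs_rpow_le {n : ℕ} (hn : 1 ≤ n) {ν β : Fin n → ℝ}
    (hν : ∀ s, ν s ∈ Set.Ioc 0 1) (hβ : ∀ s, 0 < β s) :
    ∃ A > (0 : ℝ), ∀ L ≥ (1 : ℝ),
      ∑' m : {m : Fin n → ℤ // L < ∑ s, β s * |(m s : ℝ)| ^ ν s},
          ENNReal.ofReal (Real.exp (-∑ s, β s * |(m.1 s : ℝ)| ^ ν s)) ≤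
        ENNReal.ofReal (A * (Real.exp (-L) * L ^ (∑ s, 1 / ν s - 1))) := by
  obtain ⟨n, rfl⟩ := Nat.exists_eq_add_of_le' hn
  have exponent_nonneg (s : Fin (n + 1)) : 0 ≤ 1 / ν s - 1 :=
    sub_nonneg.2 (one_le_one_div (hν s).1 (hν s).2)
  have floor_fibers := HasPolynomialFibers.sum_pi
    (fun s ↦ hasPolynomialFibers_floor_mul_abs_rpow (hβ s) (hν s)) exponent_nonneg
  have exponent_eq : ∑ s, (1 / ν s - 1) + n = ∑ s, 1 / ν s - 1 := by
    rw [Finset.sum_sub_distrib, Finset.sum_const, Finset.card_univ, Fintype.card_fin, nsmul_one,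
      Nat.cast_succ]
    ring
  have term_nonneg (m : Fin (n + 1) → ℤ) (s : Fin (n + 1)) : 0 ≤ β s * |(m s : ℝ)| ^ ν s :=
    mul_nonneg (hβ s).le (by positivity)
  rw [exponent_eq] at floor_fibers
  refine floor_fibers.exists_tsum_exp_neg_le (d := (n + 1 : ℕ)) ?_ (by positivity)
    (fun m ↦ ?_) fun m ↦ ?_
  · rw [← exponent_eq]
    exact add_nonneg (Finset.sum_nonneg fun s _ ↦ exponent_nonneg s) n.cast_nonneg
  · push_cast
    exact Finset.sum_le_sum fun s _ ↦ Nat.floor_le (term_nonneg m s)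
  · calc
      ∑ s, β s * |(m s : ℝ)| ^ ν s ≤ ∑ s, ((⌊β s * |(m s : ℝ)| ^ ν s⌋₊ : ℝ) + 1) :=
        Finset.sum_le_sum fun s _ ↦ (Nat.lt_floor_add_one _).le
      _ = _ := by simp [Finset.sum_add_distrib]

theorem one_sub_toReal_one_div {p p' : ℝ≥0∞} (hpp' : 1 / p + 1 / p' = 1) :
    1 - (1 / p).toReal = 1 / p'.toReal := by
  have hp : 1 / p ≠ ⊤ := ne_top_of_le_ne_top ENNReal.one_ne_top (le_self_add.trans_eq hpp')
  have hp' : 1 / p' ≠ ⊤ := ne_top_of_le_ne_top ENNReal.one_ne_top (le_add_self.trans_eq hpp')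
  have h := ENNReal.toReal_add hp hp'
  rw [hpp', ENNReal.toReal_one] at h
  have toReal_eq : (1 / p').toReal = 1 / p'.toReal := by simp
  linarith

theorem tail_sum_Lp_estimate_general
    (n : ℕ) (hn : 1 ≤ n) (P : ℝ) (hP : 0 < P)
    (ν β : Fin n → ℝ) (hν : ∀ s, ν s ∈ Set.Ioc (0 : ℝ) 1) (hβ : ∀ s, 0 < β s)
    (c : (Fin n → ℤ) → ℂ)
    (hc : ∀ m : Fin n → ℤ, ‖c m‖ ≤ Real.exp (-∑ s, β s * |(m s : ℝ)| ^ ν s))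
    (p p' : ℝ≥0∞) (hp : 2 ≤ p) (hpp' : 1 / p + 1 / p' = 1) :
    ∃ C > (0 : ℝ), ∃ R₀ > (1 : ℝ), ∀ R ≥ R₀,
      eLpNorm
        (fun x : Fin n → ℝ =>
          ((P ^ n)⁻¹ : ℝ) *
            ∑' m : {m : Fin n → ℤ // Real.log R < ∑ s, β s * |(m s : ℝ)| ^ ν s},
              c m * Complex.exp (2 * Real.pi * Complex.I *
                ((∑ k, ((m : Fin n → ℤ) k : ℝ) * x k) / P : ℝ)))
        p (volume.restrict {x : Fin n → ℝ | ∀ k, |x k| ≤ P / 2})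
      ≤ ENNReal.ofReal
          (C * R⁻¹ * Real.log R ^ ((∑ s, 1 / ν s - 1) / p'.toReal)) := by
  obtain ⟨A, hA, tail_le⟩ := exists_tsum_exp_neg_sum_mul_abs_rpow_le hn hν hβ
  set q := ∑ s, 1 / ν s - 1
  refine ⟨(A / P ^ n) ^ (1 / p'.toReal), by positivity, Real.exp 1,
    Real.one_lt_exp_iff.2 one_pos, fun R hR ↦ ?_⟩
  have hR0 : 0 < R := (Real.exp_pos 1).trans_le hR
  have hL : 1 ≤ Real.log R := (Real.le_log_iff_exp_le hR0).2 hR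
  have series_le := eLpNorm_tail_exp_series_le hP hp hc (L := Real.log R)
    (B := A * Real.log R ^ q) (by positivity)
    ((tail_le _ hL).trans_eq (congrArg ENNReal.ofReal (by ring)))
  rw [Fintype.card_fin, one_sub_toReal_one_div hpp'] at series_le
  refine series_le.trans_eq (congrArg ENNReal.ofReal ?_)
  rw [Real.exp_neg, Real.exp_log hR0, mul_div_right_comm,
    Real.mul_rpow (by positivity) (by positivity), ← Real.rpow_mul (by positivity)]
  ring_nf

theorem tail_sum_Lp_estimate
    (n : ℕ) (hn : 1 ≤ n) (P : ℕ) (hP : 1 ≤ P)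
    (ν β : Fin n → ℝ) (hν : ∀ s, ν s ∈ Set.Ioo (0 : ℝ) 1) (hβ : ∀ s, 0 < β s)
    (c : (Fin n → ℤ) → ℂ)
    (hc : ∀ m : Fin n → ℤ, ‖c m‖ ≤ Real.exp (-∑ s, β s * |(m s : ℝ)| ^ ν s))
    (p p' : ℝ≥0∞) (hp : 2 ≤ p) (hpp' : 1 / p + 1 / p' = 1) :
    ∃ C > (0 : ℝ), ∃ R₀ > (1 : ℝ), ∀ R ≥ R₀,
      eLpNorm
        (fun x : Fin n → ℝ =>
          (((P : ℝ) ^ n)⁻¹ : ℝ) *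
            ∑' m : {m : Fin n → ℤ // Real.log R < ∑ s, β s * |(m s : ℝ)| ^ ν s},
              c m * Complex.exp (2 * Real.pi * Complex.I *
                ((∑ k, ((m : Fin n → ℤ) k : ℝ) * x k) / P : ℝ)))
        p (volume.restrict {x : Fin n → ℝ | ∀ k, |x k| ≤ (P : ℝ) / 2})
      ≤ ENNReal.ofReal
          (C * R⁻¹ * Real.log R ^ ((∑ s, 1 / ν s - 1) / p'.toReal)) :=
  tail_sum_Lp_estimate_general n hn P (Nat.cast_pos.2 hP) ν β
    (fun s ↦ Set.Ioo_subset_Ioc_self (hν s)) hβ c hc p p' hp hpp'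
end
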